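/- arXiv:1503.05420 — 4 statements merged into one kernel-verified Lean document; each statement's English description precedes it below -/
import Mathlib

section
/- (Macaulay's theorem) Let S = ℂ[x_0, …, x_n] with its standard grading, let d ≥ 1, let V ⊆ S_d be a ℂ-linear subspace, and let c = dim_ℂ S_d − dim_ℂ V be its codimension. Let (ε_d, …, ε_1) be the Macaulay expansion of c in base d. Then the codimension in S_{d+1} of the ℂ-linear span of { ℓ·f : ℓ ∈ S_1, f ∈ V } is at most c^{⟨d⟩} = Σ_{i=1}^d C(i+ε_i+1, i+1). -/
open MvPolynomial

/-- `ε` (restricted to indices `1,…,d`) is the Macaulay expansion of `c` in base `d`. -/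
def IsMacaulayExpansion (c d : ℕ) (ε : ℕ → ℤ) : Prop :=
  (∀ i, 1 ≤ i → i ≤ d → (-1 : ℤ) ≤ ε i) ∧
  (∀ i j, 1 ≤ i → i ≤ j → j ≤ d → ε i ≤ ε j) ∧
  c = ∑ i ∈ Finset.Icc 1 d, (((i : ℤ) + ε i).toNat).choose i

def mf (d : ℕ) (e : ℕ → ℕ) : ℕ := ∑ i ∈ Finset.range d, (i + e i).choose (i + 1)
def mg (d : ℕ) (e : ℕ → ℕ) : ℕ := ∑ i ∈ Finset.range d, (i + 1 + e i).choose (i + 2)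
def MonoB (d : ℕ) (e : ℕ → ℕ) : Prop := ∀ i j, i ≤ j → j < d → e i ≤ e j

lemma mf_const (d a : ℕ) : mf d (fun _ => a) + 1 = (d + a).choose d := by
  induction d with
  | zero => simp [mf]
  | succ d ih =>
    simp only [mf] at ih ⊢
    rw [Finset.sum_range_succ, show d + 1 + a = (d + a) + 1 by ring, Nat.choose_succ_succ']
    omega

lemma mg_const (d a : ℕ) : mg d (fun _ => a) + 1 + a = (d + 1 + a).choose (d + 1) := by
  induction d with
  | zero => simp [mg]; 
  | succ d ih =>
    simp only [mg] at ih ⊢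
    rw [Finset.sum_range_succ, show d + 1 + 1 + a = (d + 1 + a) + 1 by ring, Nat.choose_succ_succ']
    have : (d + 1 + a).choose (d + 1 + 1) = (d + 1 + a).choose (d + 2) := rfl
    omega

lemma mac_pred (d : ℕ) : ∀ e, MonoB d e → 0 < mf d e →
    ∃ e', MonoB d e' ∧ mf d e' + 1 = mf d e ∧ mg d e' + 1 ≤ mg d e ∧
      ∀ i j, i < d → j + 1 = d → e' i ≤ e j := by
  induction d with
  | zero => intro e _ h; simp [mf] at h
  | succ d ih =>
    intro e he hpos
    by_cases h0 : 0 < mf d e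
    · obtain ⟨e', h1, h2, h3, h4⟩ := ih e (fun i j hij hj => he i j hij (by omega)) h0
      have hs : ∀ i ∈ Finset.range d, (if i < d then e' i else e d) = e' i := by
        intro i hi; simp at hi; simp [hi]
      have hb : ∀ i, i < d → e' i ≤ e d := fun i hi =>
        (h4 i (d-1) hi (by omega)).trans (he _ _ (by omega) (by omega))
      refine ⟨fun i => if i < d then e' i else e d, ?_, ?_, ?_, ?_⟩
      · intro i j hij hj
        dsimp only
        split_ifs with a b b
        · exact h1 i j hij b
        · exact hb i a
        · omega
        · exact le_rfl
      · simp only [mf] at h2 ⊢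
        rw [Finset.sum_range_succ, Finset.sum_range_succ, ← h2,
          Finset.sum_congr rfl (fun i hi => by rw [hs i hi])]
        simp; ring
      · simp only [mg] at h3 ⊢
        rw [Finset.sum_range_succ, Finset.sum_range_succ,
          Finset.sum_congr rfl (fun i hi => by rw [hs i hi])]
        simp; omega
      · intro i j hi hj
        obtain rfl : j = d := by omega
        dsimp only
        split_ifs with a
        · exact hb i a
        · exact le_rfl
    · have h0' : mf d e = 0 := by omega
      have hf : mf (d+1) e = (d + e d).choose (d+1) := by
        simp only [mf] at h0' ⊢
        rw [Finset.sum_range_succ, h0', zero_add]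
      have hg : (d + 1 + e d).choose (d+2) ≤ mg (d+1) e := by
        simp only [mg]
        rw [Finset.sum_range_succ]; omega
      obtain ⟨a, ha⟩ : ∃ a, e d = a + 1 := by
        refine Nat.exists_eq_succ_of_ne_zero fun h => ?_
        rw [hf, h] at hpos; simp at hpos
      refine ⟨fun _ => a, fun _ _ _ _ => le_rfl, ?_, ?_, ?_⟩
      · rw [mf_const, hf, ha]; congr 1; ring
      · have := mg_const (d+1) a
        rw [ha] at hg
        rw [show d + 1 + (a+1) = d + 1 + 1 + a by ring] at hg
        change Nat.choose _ (d+1+1) ≤ _ at hg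
        omega
      · intro i j _ hj
        obtain rfl : j = d := by omega
        dsimp only; omega

lemma mac_down (d : ℕ) (k : ℕ) : ∀ e b, MonoB d e → mf d e = b + k →
    ∃ e', MonoB d e' ∧ mf d e' = b ∧ mg d e' + k ≤ mg d e := by
  induction k with
  | zero => intro e b he h; exact ⟨e, he, h, le_rfl⟩
  | succ k ih =>
    intro e b he h
    obtain ⟨e', h1, h2, h3, _⟩ := mac_pred d e he (by omega)
    obtain ⟨e'', h4, h5, h6⟩ := ih e' b h1 (by omega)
    exact ⟨e'', h4, h5, by omega⟩

lemma mg_sub (d : ℕ) (e : ℕ → ℕ) : mg d e = mf d e + mg d (fun i => e i - 1) := by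
  simp only [mg, mf, ← Finset.sum_add_distrib]
  refine Finset.sum_congr rfl fun i _ => ?_
  rcases h : e i with _ | a
  · simp
  · simp only [Nat.add_sub_cancel]
    rw [show i + 1 + (a+1) = (i + 1 + a) + 1 by ring, Nat.choose_succ_succ']
    congr 2; ring

lemma mf_succ (d : ℕ) (e : ℕ → ℕ) : mf (d+1) e = e 0 + mg d (fun i => e (i+1)) := by
  simp only [mf, mg]
  rw [Finset.sum_range_succ']
  simp; ring

lemma mf_sub (d : ℕ) (e : ℕ → ℕ) :
    mf (d+1) e ≤ mf (d+1) (fun i => e i - 1) + (mf d (fun i => e (i+1)) + min 1 (e 0)) := by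
  simp only [mf]
  rw [Finset.sum_range_succ', Finset.sum_range_succ' (n := d)]
  have : ∑ i ∈ Finset.range d, (i + 1 + e (i+1)).choose (i+1+1) =
     ∑ i ∈ Finset.range d, (i + 1 + (e (i+1) - 1)).choose (i+1+1) +
       ∑ i ∈ Finset.range d, (i + e (i+1)).choose (i+1) := by
    rw [← Finset.sum_add_distrib]
    refine Finset.sum_congr rfl fun i _ => ?_
    rcases h : e (i+1) with _ | a
    · simp
    · simp only [Nat.add_sub_cancel]
      rw [show i + 1 + (a+1) = (i + 1 + a) + 1 by ring, Nat.choose_succ_succ, add_comm]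
      congr 2; ring
  rw [this]
  simp
  omega
open Topology Filter in
lemma li_open {M ι : Type*} [AddCommGroup M] [Module ℂ M] [Fintype ι] (v : ι → ℂ → M)
    (hc : ∀ i (φ : Module.Dual ℂ M), Continuous fun t => φ (v i t))
    (h0 : LinearIndependent ℂ (fun i => v i 0)) :
    ∀ᶠ t in 𝓝 (0:ℂ), LinearIndependent ℂ (fun i => v i t) := by
  classical
  obtain ⟨g, hg⟩ := LinearMap.exists_leftInverse_of_injective
    (Finsupp.linearCombination ℂ (fun i => v i 0)) (LinearMap.ker_eq_bot.2 h0)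
  have hgv : ∀ i, g (v i 0) = Finsupp.single i 1 := by
    intro i
    have := LinearMap.congr_fun hg (Finsupp.single i 1)
    simpa using this
  let L : M →ₗ[ℂ] (ι → ℂ) := (Finsupp.linearEquivFunOnFinite ℂ ℂ ι).toLinearMap ∘ₗ g
  let A : ℂ → Matrix ι ι ℂ := fun t => Matrix.of fun i j => L (v i t) j
  have hA : Continuous fun t => (A t).det := by
    apply Continuous.matrix_det
    refine continuous_matrix fun i j => ?_
    exact hc i (LinearMap.proj j ∘ₗ L)
  have h1 : A 0 = 1 := by
    ext i j
    simp [A, L, hgv, Matrix.one_apply, Finsupp.single_apply]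
  have h2 : (A 0).det ≠ 0 := by rw [h1]; simp
  have h3 : ∀ᶠ t in 𝓝 (0:ℂ), (A t).det ≠ 0 := hA.continuousAt.eventually_ne h2
  filter_upwards [h3] with t ht
  have := Matrix.linearIndependent_rows_of_det_ne_zero ht
  exact LinearIndependent.of_comp L this

lemma li_card_le {M ι : Type*} [AddCommGroup M] [Module ℂ M] [Fintype ι] (U : Submodule ℂ M)
    [FiniteDimensional ℂ U] (v : ι → M) (hv : ∀ i, v i ∈ U) (h : LinearIndependent ℂ v) :
    Fintype.card ι ≤ Module.finrank ℂ U := by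
  have : LinearIndependent ℂ (fun i => (⟨v i, hv i⟩ : U)) :=
    LinearIndependent.of_comp U.subtype h
  exact this.fintype_card_le_finrank

lemma map_basis {M : Type*} [AddCommGroup M] [Module ℂ M] (W : Submodule ℂ M)
    [FiniteDimensional ℂ W] (F : M →ₗ[ℂ] M) :
    ∃ w : Fin (Module.finrank ℂ (W.map F)) → M, (∀ i, w i ∈ W) ∧
      LinearIndependent ℂ (fun i => F (w i)) ∧
      Submodule.span ℂ (Set.range fun i => F (w i)) = W.map F := by
  let b := Module.finBasis ℂ (W.map F)
  have : ∀ i, ∃ w ∈ W, F w = b i := fun i => (b i).2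
  choose w hw hb using this
  refine ⟨w, hw, ?_, ?_⟩
  · simp only [hb]
    exact b.linearIndependent.map' (W.map F).subtype (Submodule.ker_subtype _)
  · simp only [hb]
    have h := congrArg (Submodule.map (W.map F).subtype) b.span_eq
    rw [Submodule.map_span, ← Set.range_comp, Submodule.map_top, Submodule.range_subtype] at h
    exact h

open Topology Filter in
lemma rank_semicont {M : Type*} [AddCommGroup M] [Module ℂ M] (W : Submodule ℂ M)
    [FiniteDimensional ℂ W] (F : ℂ → M →ₗ[ℂ] M)
    (hF : ∀ w (φ : Module.Dual ℂ M), Continuous fun t => φ (F t w)) :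
    ∀ᶠ t in 𝓝 (0:ℂ), Module.finrank ℂ (W.map (F 0)) ≤ Module.finrank ℂ (W.map (F t)) := by
  obtain ⟨w, hw, hli, _⟩ := map_basis W (F 0)
  filter_upwards [li_open (fun i t => F t (w i)) (fun i φ => hF _ φ) hli] with t ht
  simpa using li_card_le (W.map (F t)) _ (fun i => Submodule.mem_map_of_mem (hw i)) ht

open Topology Filter in
lemma rank_jump {M : Type*} [AddCommGroup M] [Module ℂ M] (W : Submodule ℂ M)
    [FiniteDimensional ℂ W] (F : ℂ → M →ₗ[ℂ] M)
    (hF : ∀ w (φ : Module.Dual ℂ M), Continuous fun t => φ (F t w))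
    (u : M) (hu : u ∈ W) (v : ℂ → M) (hv : ∀ φ : Module.Dual ℂ M, Continuous fun t => φ (v t))
    (huv : ∀ t, F t u = t • v t) (h0 : v 0 ∉ W.map (F 0)) :
    ∀ᶠ t in 𝓝[≠] (0:ℂ), Module.finrank ℂ (W.map (F 0)) + 1 ≤ Module.finrank ℂ (W.map (F t)) := by
  obtain ⟨w, hw, hli, hsp⟩ := map_basis W (F 0)
  have hli' : LinearIndependent ℂ (fun i : Option (Fin (Module.finrank ℂ (W.map (F 0)))) =>
      (i.elim v (fun i t => F t (w i)) : ℂ → M) 0) := by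
    rw [linearIndependent_option]
    refine ⟨hli, ?_⟩
    change v 0 ∉ Submodule.span ℂ (Set.range fun i => F 0 (w i))
    rwa [hsp]
  have := li_open (fun i : Option (Fin (Module.finrank ℂ (W.map (F 0)))) =>
      (i.elim v (fun i t => F t (w i)) : ℂ → M)) (by
        rintro (_ | i) φ
        · exact hv φ
        · exact hF _ φ) hli'
  filter_upwards [this.filter_mono nhdsWithin_le_nhds, self_mem_nhdsWithin] with t ht ht0
  have h := li_card_le (W.map (F t)) _ (by
    rintro (_ | i)
    · change v t ∈ _
      have : v t = t⁻¹ • F t u := by rw [huv, smul_smul, inv_mul_cancel₀ ht0, one_smul]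
      rw [this]
      exact Submodule.smul_mem _ _ (Submodule.mem_map_of_mem hu)
    · exact Submodule.mem_map_of_mem (hw i)) ht
  simpa using h

/-- `l` behaves generically with respect to `W` and `E`, up to the power `R`. -/
def GoodFor {M : Type*} [AddCommGroup M] [Module ℂ M] (E : Submodule ℂ (Module.End ℂ M))
    (W : Submodule ℂ M) (R : ℕ) (l : Module.End ℂ M) : Prop :=
  ∀ r, r < R → ∀ k ∈ E, ∀ u ∈ W, (l ^ (r+1)) u = 0 → (l ^ r) (k u) ∈ W.map (l ^ (r+1))

lemma pow_expand {M : Type*} [AddCommGroup M] [Module ℂ M] (l k : Module.End ℂ M)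
    (h : Commute l k) (r : ℕ) (t : ℂ) (w : M) :
    ((l + t • k) ^ r) w =
      ∑ j ∈ Finset.range (r+1), t ^ j • ((r.choose j : ℂ) • (l ^ (r - j)) ((k ^ j) w)) := by
  have h' : Commute (t • k) l := (h.symm).smul_left t
  rw [add_comm, h'.add_pow, LinearMap.sum_apply]
  refine Finset.sum_congr rfl fun j hj => ?_
  rw [smul_pow, smul_mul_assoc, smul_mul_assoc, LinearMap.smul_apply, ((h.symm).pow_pow j (r-j)).eq]
  congr 1
  rw [← (Nat.cast_commute (r.choose j) _).eq, ← nsmul_eq_mul, LinearMap.smul_apply, Nat.cast_smul_eq_nsmul]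
  rfl

open Topology Filter in
lemma exists_good {M : Type*} [AddCommGroup M] [Module ℂ M] (E : Submodule ℂ (Module.End ℂ M))
    (hcomm : ∀ a ∈ E, ∀ b ∈ E, Commute a b)
    (W : Submodule ℂ M) [FiniteDimensional ℂ W] (R : ℕ) :
    ∃ l ∈ E, GoodFor E W R l := by
  let ρ : E → ℕ := fun l => ∑ r ∈ Finset.range R, Module.finrank ℂ (W.map (l.1 ^ (r+1)))
  have hbd : ∀ l, ρ l ≤ R * Module.finrank ℂ W := by
    intro l
    refine (Finset.sum_le_card_nsmul _ _ (Module.finrank ℂ W) ?_).trans (by simp)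
    intro r _
    exact Submodule.finrank_map_le _ _
  obtain ⟨l, hl⟩ : ∃ l, ∀ l', ρ l' ≤ ρ l := by
    have hfin : (Set.range ρ).Finite :=
      (Set.finite_Iic (R * Module.finrank ℂ W)).subset (by rintro _ ⟨l, rfl⟩; exact hbd l)
    obtain ⟨m, ⟨l, rfl⟩, hm⟩ := hfin.exists_maximal ⟨_, Set.mem_range_self (0 : E)⟩
    refine ⟨l, fun l' => ?_⟩
    by_contra hlt
    exact hlt (hm (Set.mem_range_self l') (by omega))
  refine ⟨l, l.2, ?_⟩
  intro r hr k hk u hu hlu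
  by_contra hnot
  have hlk : Commute l.1 k := hcomm _ l.2 _ hk
  have hcont : ∀ s w (φ : Module.Dual ℂ M), Continuous fun t : ℂ => φ (((l.1 + t • k) ^ s) w) := by
    intro s w φ
    simp only [pow_expand _ _ hlk, map_sum, map_smul]
    fun_prop
  have e0 : ∀ s, (l.1 + (0:ℂ) • k) ^ s = l.1 ^ s := by intro s; simp
  have hsemi : ∀ᶠ t in 𝓝[≠] (0:ℂ), ∀ s ∈ Finset.range R,
      Module.finrank ℂ (W.map (l.1 ^ (s+1))) ≤ Module.finrank ℂ (W.map ((l.1 + t • k) ^ (s+1))) := by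
    rw [Filter.eventually_all_finset]
    intro s _
    have := rank_semicont W (fun t => (l.1 + t • k) ^ (s+1)) (hcont _)
    rw [e0] at this
    exact this.filter_mono nhdsWithin_le_nhds
  have hjump := rank_jump W (fun t => (l.1 + t • k) ^ (r+1)) (hcont _) u hu
    (fun t => ∑ j ∈ Finset.range (r+1),
      t ^ j • (((r+1).choose (j+1) : ℂ) • (l.1 ^ (r - j)) ((k ^ (j+1)) u)))
    (by intro φ; simp only [map_sum, map_smul]; fun_prop)
    (by
      intro t
      simp only [pow_expand _ _ hlk]
      rw [Finset.sum_range_succ', Finset.smul_sum]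
      simp only [pow_zero, Nat.sub_zero, Module.End.one_apply, hlu, smul_zero, add_zero]
      refine Finset.sum_congr rfl fun j _ => ?_
      rw [smul_smul t, pow_succ', Nat.add_sub_add_right])
    (by
      rw [Finset.sum_range_succ', Finset.sum_eq_zero (by intro j _; simp)]
      simp only [e0, pow_zero, zero_add, one_smul, Nat.choose_one_right, pow_one, Nat.sub_zero]
      intro hmem
      apply hnot
      rwa [Submodule.smul_mem_iff _ (by exact_mod_cast Nat.succ_ne_zero r)] at hmem)
  rw [e0] at hjump
  obtain ⟨t, h1, h2⟩ := (hsemi.and hjump).exists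
  have hlt : ρ l < ρ ⟨l.1 + t • k, E.add_mem l.2 (E.smul_mem _ hk)⟩ :=
    Finset.sum_lt_sum h1 ⟨r, Finset.mem_range.2 hr, h2⟩
  exact absurd hlt (hl _).not_gt

lemma rank_null {M : Type*} [AddCommGroup M] [Module ℂ M] (W : Submodule ℂ M)
    [FiniteDimensional ℂ W] (l : Module.End ℂ M) :
    Module.finrank ℂ W = Module.finrank ℂ (W.map l) +
      Module.finrank ℂ (W ⊓ LinearMap.ker l : Submodule ℂ M) := by
  have h := LinearMap.finrank_range_add_finrank_ker (l.domRestrict W)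
  rw [LinearMap.range_domRestrict] at h
  rw [← h, ← Submodule.map_comap_subtype, Submodule.finrank_map_subtype_eq]
  rfl

/-- Commuting degree-lowering operators `E` on a graded family `N`, jointly injective. -/
structure LowerSys {M : Type*} [AddCommGroup M] [Module ℂ M] (E : Submodule ℂ (Module.End ℂ M))
    (N : ℕ → Submodule ℂ M) : Prop where
  comm : ∀ a ∈ E, ∀ b ∈ E, Commute a b
  maps : ∀ a ∈ E, ∀ k, ∀ x ∈ N (k+1), a x ∈ N k
  inj : ∀ k, ∀ x ∈ N (k+1), (∀ a ∈ E, a x = 0) → x = 0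

lemma good_map {M : Type*} [AddCommGroup M] [Module ℂ M] (E : Submodule ℂ (Module.End ℂ M))
    (hcomm : ∀ a ∈ E, ∀ b ∈ E, Commute a b)
    (W : Submodule ℂ M) (R : ℕ) (l : Module.End ℂ M) (hl : l ∈ E) (h : GoodFor E W (R+1) l) :
    GoodFor E (W.map l) R l := by
  rintro r hr k hk _ ⟨w, hw, rfl⟩ h0
  have h1 := h (r+1) (by omega) k hk w hw (by rw [pow_succ]; exact h0)
  have e1 : (l ^ (r+1)) (k w) = (l ^ r) (k (l w)) := by
    rw [pow_succ, Module.End.mul_apply]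
    have := LinearMap.congr_fun (hcomm l hl k hk).eq w
    simp only [Module.End.mul_apply] at this
    rw [this]
  rw [e1] at h1
  obtain ⟨x, hx, hx'⟩ := h1
  refine ⟨l x, ⟨x, hx, rfl⟩, ?_⟩
  rw [← hx', pow_succ _ (r+1)]
  rfl

theorem mac_core {M : Type*} [AddCommGroup M] [Module ℂ M] (n : ℕ) :
    ∀ (d : ℕ) (E : Submodule ℂ (Module.End ℂ M)) (N : ℕ → Submodule ℂ M), LowerSys E N →
    FiniteDimensional ℂ E → Module.finrank ℂ E < n →
    ∀ (W : Submodule ℂ M), FiniteDimensional ℂ W → W ≤ N (d+1) → ∀ l ∈ E, GoodFor E W (d+1) l →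
    ∀ e, MonoB d e → Module.finrank ℂ (W.map l) ≤ mf d e → Module.finrank ℂ W ≤ mg d e := by
  induction n with
  | zero => intro _ _ _ _ _ h; exact absurd h (Nat.not_lt_zero _)
  | succ n ihn =>
    intro d
    induction d with
    | zero =>
      intro E N hS hE hn W hW hWN l hl hG e _ hf
      have h0 : Module.finrank ℂ (W.map l) = 0 := by simpa [mf] using hf
      rw [Submodule.finrank_eq_zero] at h0
      have : W = ⊥ := by
        rw [eq_bot_iff]
        intro u hu
        refine hS.inj 0 u (hWN hu) fun a ha => ?_
        have h1 : l u = 0 := by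
          have : l u ∈ W.map l := Submodule.mem_map_of_mem hu
          rw [h0] at this; simpa using this
        have h2 := hG 0 (by omega) a ha u hu (by simpa using h1)
        simpa [h0] using h2
      rw [this]; simp
    | succ d ihd =>
      intro E N hS hE hn W hW hWN l hl hG e0 he0 hf0
      by_contra hlt0
      -- normalise so that the dimension of the image is exact
      obtain ⟨e, he, hf, hg⟩ := mac_down (d+1) (mf (d+1) e0 - Module.finrank ℂ (W.map l)) e0
        (Module.finrank ℂ (W.map l)) he0 (by omega)
      have hlt : mg (d+1) e < Module.finrank ℂ W := by omega
      have hl0 : l ≠ 0 := by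
        rintro rfl
        have h0 : W.map (0 : Module.End ℂ M) = ⊥ := by simp
        have : W = ⊥ := by
          rw [eq_bot_iff]
          intro u hu
          refine hS.inj _ u (hWN hu) fun a ha => ?_
          have h2 := hG 0 (by omega) a ha u hu (by simp)
          simpa using h2
        rw [this] at hlt; simp at hlt
      set B := W.map l with hB
      set W0 : Submodule ℂ M := W ⊓ LinearMap.ker l with hW0
      have hrnW := rank_null W l
      rw [← hB, ← hW0] at hrnW
      have hW0big : mg (d+1) (fun i => e i - 1) < Module.finrank ℂ W0 := by
        have := mg_sub (d+1) e
        omega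
      have : FiniteDimensional ℂ W0 := Submodule.finiteDimensional_of_le (inf_le_left : W0 ≤ W)
      -- a complement of `l` in `E`
      obtain ⟨C, hC⟩ := Submodule.exists_isCompl (Submodule.span ℂ {(⟨l, hl⟩ : E)})
      let E' : Submodule ℂ (Module.End ℂ M) := C.map E.subtype
      have hE'E : E' ≤ E := Submodule.map_subtype_le _ _
      have : FiniteDimensional ℂ E' := Submodule.finiteDimensional_of_le hE'E
      have hE'n : Module.finrank ℂ E' < n := by
        have h1 := Submodule.finrank_add_eq_of_isCompl hC
        rw [finrank_span_singleton (by intro h; exact hl0 (congrArg Subtype.val h))] at h1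
        have h2 : Module.finrank ℂ E' = Module.finrank ℂ C := Submodule.finrank_map_subtype_eq _ _
        omega
      have hdecomp : ∀ a ∈ E, ∃ c : ℂ, ∃ b ∈ E', a = c • l + b := by
        intro a ha
        have : (⟨a, ha⟩ : E) ∈ Submodule.span ℂ {(⟨l, hl⟩ : E)} ⊔ C := by
          rw [hC.sup_eq_top]; trivial
        obtain ⟨y, hy, z, hz, hyz⟩ := Submodule.mem_sup.1 this
        obtain ⟨c, rfl⟩ := Submodule.mem_span_singleton.1 hy
        exact ⟨c, z, ⟨z, hz, rfl⟩, (congrArg Subtype.val hyz).symm⟩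
      have hlcomm : ∀ a ∈ E, ∀ x, l (a x) = a (l x) := fun a ha x =>
        LinearMap.congr_fun (hS.comm l hl a ha).eq x
      have hS' : LowerSys E' (fun k => N k ⊓ LinearMap.ker l) := by
        refine ⟨fun a ha b hb => hS.comm a (hE'E ha) b (hE'E hb), ?_, ?_⟩
        · rintro a ha k x ⟨hx, hx'⟩
          refine ⟨hS.maps a (hE'E ha) k x hx, ?_⟩
          have hx'' : l x = 0 := hx'
          change l (a x) = 0
          rw [hlcomm a (hE'E ha), hx'', map_zero]
        · rintro k x ⟨hx, hx'⟩ h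
          refine hS.inj k x hx fun a ha => ?_
          have hx'' : l x = 0 := hx'
          obtain ⟨c, b, hb, rfl⟩ := hdecomp a ha
          simp [hx'', h b hb]
      obtain ⟨l', hl', hG'⟩ := exists_good E' hS'.comm W0 (d+2)
      have hbig : mf (d+1) (fun i => e i - 1) < Module.finrank ℂ (W0.map l') := by
        by_contra hcon
        have := ihn (d+1) E' _ hS' inferInstance hE'n W0 inferInstance
          (inf_le_inf_right _ hWN) l' hl' hG' (fun i => e i - 1)
          (fun i j hij hj => Nat.sub_le_sub_right (he i j hij hj) 1) (by omega)
        omega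
      have : FiniteDimensional ℂ B := by rw [hB]; infer_instance
      have hrnB := rank_null B l
      have : FiniteDimensional ℂ (B ⊓ LinearMap.ker l : Submodule ℂ M) :=
        Submodule.finiteDimensional_of_le (inf_le_left : _ ≤ B)
      have hsub : W0.map l' ≤ B ⊓ LinearMap.ker l := by
        rintro _ ⟨u, ⟨hu, hu'⟩, rfl⟩
        have hu'' : l u = 0 := hu'
        refine ⟨?_, ?_⟩
        · have h2 := hG 0 (by omega) l' (hE'E hl') u hu (by simpa using hu'')
          simpa [hB] using h2
        · change l (l' u) = 0
          rw [hlcomm l' (hE'E hl'), hu'', map_zero]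
      have hmono := Submodule.finrank_mono hsub
      have hms := mf_sub d e
      have hsucc := mf_succ d e
      have hBN : B ≤ N (d+1) := by
        rintro _ ⟨w, hw, rfl⟩
        exact hS.maps l hl _ w (hWN hw)
      have hGB : GoodFor E B (d+1) l := good_map E hS.comm W (d+1) l hl hG
      have heS : MonoB d (fun i => e (i+1)) := fun i j hij hj => he _ _ (by omega) (by omega)
      have hIH := ihd E N hS hE hn B inferInstance hBN l hl hGB
      by_cases hle : Module.finrank ℂ (B.map l) < mf d (fun i => e (i+1))
      · obtain ⟨e2, he2, hf2, hg2⟩ := mac_down d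
          (mf d (fun i => e (i+1)) - Module.finrank ℂ (B.map l)) _
          (Module.finrank ℂ (B.map l)) heS (by omega)
        have := hIH e2 he2 hf2.ge
        omega
      · have := hIH _ heS (by omega)
        omega

lemma homog_finite (n k : ℕ) :
    FiniteDimensional ℂ (homogeneousSubmodule (Fin (n + 1)) ℂ k) := by
  classical
  have hle : homogeneousSubmodule (Fin (n + 1)) ℂ k ≤ Submodule.span ℂ
      (((Finset.univ.finsuppAntidiag k).image
        (fun s => monomial s (1:ℂ)) : Finset (MvPolynomial (Fin (n+1)) ℂ)) : Set _) := by
    intro p hp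
    rw [p.as_sum]
    refine Submodule.sum_mem _ fun s hs => ?_
    rw [← mul_one (coeff s p), ← smul_eq_mul, ← smul_monomial]
    refine Submodule.smul_mem _ _ (Submodule.subset_span ?_)
    simp only [Finset.coe_image, Set.mem_image, Finset.mem_coe]
    refine ⟨s, ?_, rfl⟩
    rw [Finset.mem_finsuppAntidiag]
    have h1 := (mem_homogeneousSubmodule _ _).1 hp (mem_support_iff.1 hs)
    refine ⟨?_, by simp⟩
    rw [← h1, Finsupp.weight_apply, Finsupp.sum_fintype _ _ (by simp)]
    simp
  exact Submodule.finiteDimensional_of_le hle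

/-- the transpose of multiplication -/
noncomputable def contr (σ : Type) :
    MvPolynomial σ ℂ →ₗ[ℂ] Module.End ℂ (Module.Dual ℂ (MvPolynomial σ ℂ)) :=
  Module.Dual.transpose ∘ₗ LinearMap.mul ℂ (MvPolynomial σ ℂ)

lemma contr_apply (σ : Type) (p q : MvPolynomial σ ℂ) (φ : Module.Dual ℂ (MvPolynomial σ ℂ)) :
    contr σ p φ q = φ (p * q) := rfl

/-- functionals concentrated in degree `k` -/
def degDual (σ : Type) (k : ℕ) : Submodule ℂ (Module.Dual ℂ (MvPolynomial σ ℂ)) where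
  carrier := {φ | ∀ j, j ≠ k → ∀ p ∈ homogeneousSubmodule σ ℂ j, φ p = 0}
  add_mem' := by
    intro a b ha hb j hj p hp
    simp [ha j hj p hp, hb j hj p hp]
  zero_mem' := by intro j _ p _; rfl
  smul_mem' := by
    intro c a ha j hj p hp
    simp [ha j hj p hp]

lemma degDual_apply (σ : Type) (k : ℕ) (φ : Module.Dual ℂ (MvPolynomial σ ℂ))
    (h : φ ∈ degDual σ k) (p : MvPolynomial σ ℂ) : φ p = φ (homogeneousComponent k p) := by
  conv_lhs => rw [← sum_homogeneousComponent p, map_sum]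
  by_cases hk : k ∈ Finset.range (p.totalDegree + 1)
  · exact Finset.sum_eq_single k (fun j _ hj => h j hj _ (homogeneousComponent_mem _ _))
      (fun h' => absurd hk h')
  · rw [homogeneousComponent_eq_zero, map_zero]
    · exact Finset.sum_eq_zero fun j hj => h j (by rintro rfl; exact hk hj) _
        (homogeneousComponent_mem _ _)
    · simp at hk; omega

lemma contr_sys (n : ℕ) : LowerSys ((homogeneousSubmodule (Fin (n+1)) ℂ 1).map (contr (Fin (n+1))))
    (degDual (Fin (n+1))) := by
  refine ⟨?_, ?_, ?_⟩
  · rintro _ ⟨p, _, rfl⟩ _ ⟨q, _, rfl⟩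
    refine LinearMap.ext fun φ => LinearMap.ext fun x => ?_
    simp only [Module.End.mul_apply, contr_apply]
    congr 1; ring
  · rintro _ ⟨p, hp, rfl⟩ k φ hφ j hj q hq
    rw [contr_apply]
    refine hφ (1 + j) (by omega) _ ?_
    exact IsHomogeneous.mul hp hq
  · intro k φ hφ h
    refine LinearMap.ext fun p => ?_
    rw [p.as_sum, map_sum, LinearMap.zero_apply]
    refine Finset.sum_eq_zero fun s hs => ?_
    by_cases hs0 : s = 0
    · subst hs0
      refine hφ 0 (by omega) _ ?_
      exact isHomogeneous_C _ _
    · obtain ⟨i, hi⟩ : ∃ i, s i ≠ 0 := by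
        by_contra hcon
        push Not at hcon
        exact hs0 (Finsupp.ext hcon)
      have e1 : monomial s (coeff s p) = X i * monomial (s - Finsupp.single i 1) (coeff s p) := by
        rw [X, monomial_mul, one_mul, add_tsub_cancel_of_le]
        rw [Finsupp.single_le_iff]; omega
      rw [e1, ← contr_apply, h _ ⟨X i, isHomogeneous_X _ _, rfl⟩]
      rfl

/-- functionals on `S_k / U` as functionals on `S`. -/
noncomputable def annMap (n k : ℕ) (U : Submodule ℂ (MvPolynomial (Fin (n+1)) ℂ)) :
    Module.Dual ℂ (homogeneousSubmodule (Fin (n+1)) ℂ k ⧸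
      U.comap (homogeneousSubmodule (Fin (n+1)) ℂ k).subtype) →ₗ[ℂ]
    Module.Dual ℂ (MvPolynomial (Fin (n+1)) ℂ) :=
  Module.Dual.transpose ((Submodule.mkQ _) ∘ₗ
    ((homogeneousComponent k).codRestrict _ (homogeneousComponent_mem k)))

lemma annMap_apply (n k : ℕ) (U : Submodule ℂ (MvPolynomial (Fin (n+1)) ℂ)) (ψ) (p) :
    annMap n k U ψ p = ψ (Submodule.Quotient.mk
      ⟨homogeneousComponent k p, homogeneousComponent_mem k p⟩) := rfl

lemma annMap_inj (n k : ℕ) (U : Submodule ℂ (MvPolynomial (Fin (n+1)) ℂ)) :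
    Function.Injective (annMap n k U) := by
  rw [injective_iff_map_eq_zero]
  intro ψ hψ
  refine LinearMap.ext fun x => ?_
  obtain ⟨⟨p, hp⟩, rfl⟩ := Submodule.Quotient.mk_surjective _ x
  have := LinearMap.congr_fun hψ p
  rw [annMap_apply] at this
  simp only [homogeneousComponent_of_mem hp, if_true] at this
  exact this

lemma annMap_range (n k : ℕ) (U : Submodule ℂ (MvPolynomial (Fin (n+1)) ℂ))
    (hU : U ≤ homogeneousSubmodule (Fin (n+1)) ℂ k) (φ) :
    φ ∈ LinearMap.range (annMap n k U) ↔ φ ∈ degDual (Fin (n+1)) k ∧ ∀ p ∈ U, φ p = 0 := by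
  constructor
  · rintro ⟨ψ, rfl⟩
    constructor
    · intro j hj p hp
      rw [annMap_apply]
      simp only [homogeneousComponent_of_mem hp, if_neg (Ne.symm hj)]
      exact map_zero ψ
    · intro p hp
      rw [annMap_apply]
      simp only [homogeneousComponent_of_mem (hU hp), if_true]
      rw [(Submodule.Quotient.mk_eq_zero _).2, map_zero]
      exact hp
  · rintro ⟨h1, h2⟩
    refine ⟨Submodule.liftQ _ (φ ∘ₗ (homogeneousSubmodule (Fin (n+1)) ℂ k).subtype) ?_, ?_⟩
    · intro x hx
      exact h2 _ hx
    · refine LinearMap.ext fun p => ?_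
      rw [degDual_apply _ _ _ h1 p]
      rfl

lemma annMap_finrank (n k : ℕ) (U : Submodule ℂ (MvPolynomial (Fin (n+1)) ℂ))
    (hU : U ≤ homogeneousSubmodule (Fin (n+1)) ℂ k) :
    Module.finrank ℂ (LinearMap.range (annMap n k U)) =
      Module.finrank ℂ (homogeneousSubmodule (Fin (n+1)) ℂ k) - Module.finrank ℂ U := by
  have := homog_finite n k
  rw [LinearMap.finrank_range_of_inj (annMap_inj n k U), Subspace.dual_finrank_eq,
    Submodule.finrank_quotient]
  congr 1
  rw [← Submodule.finrank_map_subtype_eq, Submodule.map_comap_subtype, inf_eq_right.2 hU]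


lemma sum_Icc_shift (d : ℕ) (F : ℕ → ℕ) :
    ∑ i ∈ Finset.Icc 1 d, F i = ∑ i ∈ Finset.range d, F (i+1) := by
  induction d with
  | zero => simp
  | succ d ih => rw [Finset.sum_Icc_succ_top (by omega), Finset.sum_range_succ, ih]

/-- **Macaulay's theorem.** Let `V ⊆ S_d` be a linear subspace of the space of
degree-`d` homogeneous polynomials in `S = ℂ[x_0,…,x_n]`, of codimension `c`, with
Macaulay expansion `(ε_d,…,ε_1)` of `c` in base `d`.  Then the span of
`{ℓ·f : ℓ ∈ S_1, f ∈ V}` has codimension at most `c^⟨d⟩ = ∑ C(i+ε_i+1, i+1)` in `S_{d+1}`. -/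
theorem macaulay_growth_bound (n d : ℕ) (hd : 1 ≤ d)
    (V : Submodule ℂ (MvPolynomial (Fin (n + 1)) ℂ))
    (hV : V ≤ homogeneousSubmodule (Fin (n + 1)) ℂ d)
    (c : ℕ)
    (hc : c = Module.finrank ℂ (homogeneousSubmodule (Fin (n + 1)) ℂ d) -
      Module.finrank ℂ V)
    (ε : ℕ → ℤ) (hε : IsMacaulayExpansion c d ε) :
    Module.finrank ℂ (homogeneousSubmodule (Fin (n + 1)) ℂ (d + 1)) -
      Module.finrank ℂ (Submodule.span ℂ
        {g : MvPolynomial (Fin (n + 1)) ℂ |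
          ∃ l ∈ homogeneousSubmodule (Fin (n + 1)) ℂ 1, ∃ f ∈ V, g = l * f}) ≤
      ∑ i ∈ Finset.Icc 1 d, (((i : ℤ) + ε i + 1).toNat).choose (i + 1) := by
  have hfin := homog_finite n (d+1)
  have hfin1 := homog_finite n 1
  have hfind := homog_finite n d
  set V' := Submodule.span ℂ {g : MvPolynomial (Fin (n + 1)) ℂ |
          ∃ l ∈ homogeneousSubmodule (Fin (n + 1)) ℂ 1, ∃ f ∈ V, g = l * f} with hV'
  have hV'le : V' ≤ homogeneousSubmodule (Fin (n + 1)) ℂ (d+1) := by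
    rw [hV', Submodule.span_le]
    rintro _ ⟨l, hl, f, hf, rfl⟩
    have := IsHomogeneous.mul (φ := l) (ψ := f) hl (hV hf)
    rw [add_comm 1 d] at this
    exact this
  obtain ⟨h1, h2, h3⟩ := hε
  have hS := contr_sys n
  let W := LinearMap.range (annMap n (d+1) V')
  obtain ⟨l, hl, hG⟩ := exists_good _ hS.comm W (d+1)
  let e : ℕ → ℕ := fun i => (ε (i+1) + 1).toNat
  have hWN : W ≤ degDual (Fin (n+1)) (d+1) := fun φ hφ =>
    ((annMap_range n (d+1) V' hV'le φ).1 hφ).1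
  have hmap : W.map l ≤ LinearMap.range (annMap n d V) := by
    rintro _ ⟨φ, hφ, rfl⟩
    rw [annMap_range n d V hV]
    refine ⟨hS.maps l hl d φ (hWN hφ), fun p hp => ?_⟩
    obtain ⟨q, hq, rfl⟩ := hl
    rw [contr_apply]
    exact ((annMap_range n (d+1) V' hV'le φ).1 hφ).2 _ (Submodule.subset_span ⟨q, hq, p, hp, rfl⟩)
  have hcard := (Submodule.finrank_mono hmap).trans_eq (annMap_finrank n d V hV)
  rw [← hc] at hcard
  have hfe : c = mf d e := by
    rw [h3, mf, sum_Icc_shift]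
    refine Finset.sum_congr rfl fun i hi => ?_
    rw [Finset.mem_range] at hi
    have := h1 (i+1) (by omega) (by omega)
    congr 1
    simp only [e]
    omega
  have hge : ∑ i ∈ Finset.Icc 1 d, (((i : ℤ) + ε i + 1).toNat).choose (i + 1) = mg d e := by
    rw [mg, sum_Icc_shift]
    refine Finset.sum_congr rfl fun i hi => ?_
    rw [Finset.mem_range] at hi
    have := h1 (i+1) (by omega) (by omega)
    congr 1
    simp only [e]
    omega
  have hmono : MonoB d e := by
    intro i j hij hj
    have := h2 (i+1) (j+1) (by omega) (by omega) (by omega)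
    exact Int.toNat_le_toNat (by omega)
  rw [hge, ← annMap_finrank n (d+1) V' hV'le]
  exact mac_core _ d _ _ hS inferInstance (Nat.lt_succ_self _) W inferInstance hWN l hl hG e hmono
    (hcard.trans hfe.le)
end

section
/- Let S = ℂ[x_0, …, x_n], let I ⊆ S be a homogeneous ideal, let d ≥ 2 be an integer, let c = h_I(d), and let (ε_d, …, ε_1) be the Macaulay expansion of c in base d. Then h_I(d−1) ≥ c_{*d} = Σ_{i=2}^d C(i+ε_i−1, i−1). Moreover, if ε_1 ≥ 0 then the strict inequality h_I(d−1) > c_{*d} holds. -/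
open MvPolynomial

/-- An ideal of `ℂ[x_0,…,x_n]` is homogeneous if it contains all homogeneous
components of its elements. -/
def IsHomogeneousIdeal {n : ℕ} (I : Ideal (MvPolynomial (Fin (n + 1)) ℂ)) : Prop :=
  ∀ f ∈ I, ∀ k : ℕ, homogeneousComponent k f ∈ I

/-- The Hilbert function of an ideal `I ⊆ ℂ[x_0,…,x_n]`:
`h_I(k) = dim S_k - dim (I ∩ S_k)`. -/
noncomputable def hilbertFn {n : ℕ} (I : Ideal (MvPolynomial (Fin (n + 1)) ℂ))
    (k : ℕ) : ℕ :=
  Module.finrank ℂ (homogeneousSubmodule (Fin (n + 1)) ℂ k) -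
    Module.finrank ℂ
      (Submodule.restrictScalars ℂ I ⊓ homogeneousSubmodule (Fin (n + 1)) ℂ k :
        Submodule ℂ (MvPolynomial (Fin (n + 1)) ℂ))

/-- Green's function `c ↦ c_{<d+1>}`. -/
def HH : ℕ → ℕ → ℕ
  | 0, c => c - 1
  | d + 1, c =>
      (d + Nat.findGreatest (fun N => (d + 1 + N).choose (d + 2) ≤ c) c).choose (d + 2) +
      HH d (c - (d + 1 + Nat.findGreatest (fun N => (d + 1 + N).choose (d + 2) ≤ c) c).choose (d + 2))

lemma choose_ge_self (d N : ℕ) : N ≤ (d + 1 + N).choose (d + 2) := by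
  induction N with
  | zero => simp
  | succ N ih =>
    have h : (d + 1 + (N + 1)).choose (d + 2) = (d+1+N).choose (d+1) + (d+1+N).choose (d+2) := by
      rw [← add_assoc, Nat.choose_succ_succ]
    have : 0 < (d+1+N).choose (d+1) := Nat.choose_pos (by omega)
    omega

lemma pascal1 (d N : ℕ) : (d + 1 + (N + 1)).choose (d + 2) =
    (d+1+N).choose (d+1) + (d+1+N).choose (d+2) := by
  rw [← add_assoc, Nat.choose_succ_succ]

lemma findG_eq (d N r : ℕ) (hr : r < (d + 1 + N).choose (d + 1)) :
    Nat.findGreatest (fun M => (d + 1 + M).choose (d + 2) ≤ (d + 1 + N).choose (d + 2) + r)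
      ((d + 1 + N).choose (d + 2) + r) = N := by
  rw [Nat.findGreatest_eq_iff]
  refine ⟨?_, ?_, ?_⟩
  · have := choose_ge_self d N; omega
  · intro _; omega
  · intro M hM _ hle
    have h1 : (d + 1 + (N + 1)).choose (d + 2) ≤ (d + 1 + M).choose (d + 2) :=
      Nat.choose_le_choose _ (by omega)
    have := pascal1 d N
    omega

lemma HH_block_lt (d N r : ℕ) (hr : r < (d + 1 + N).choose (d + 1)) :
    HH (d + 1) ((d + 1 + N).choose (d + 2) + r) = (d + N).choose (d + 2) + HH d r := by
  rw [HH, findG_eq d N r hr]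
  congr 2
  omega

lemma HH_zero (d : ℕ) : HH d 0 = 0 := by
  induction d with
  | zero => rfl
  | succ d ih =>
    have := HH_block_lt d 0 0 (by simp)
    simpa [ih, Nat.choose_eq_zero_of_lt] using this

lemma HH_choose (d N : ℕ) : HH d ((d + 1 + N).choose (d + 1)) = (d + N).choose (d + 1) := by
  cases d with
  | zero => simp [HH, add_comm]
  | succ d =>
    have := HH_block_lt d (N + 1) 0 (Nat.choose_pos (by omega))
    rw [HH_zero] at this
    rw [show d + 1 + 1 + N = d + 1 + (N + 1) by ring, show d + 1 + N = d + (N+1) by ring]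
    simpa using this

lemma HH_block (d N r : ℕ) (hr : r ≤ (d + 1 + N).choose (d + 1)) :
    HH (d + 1) ((d + 1 + N).choose (d + 2) + r) = (d + N).choose (d + 2) + HH d r := by
  rcases hr.lt_or_eq with h | h
  · exact HH_block_lt d N r h
  · subst h
    have h1 := HH_choose (d + 1) N
    rw [HH_choose]
    rw [show d + 1 + 1 + N = d + 1 + (N + 1) by ring, pascal1] at h1
    rw [Nat.add_comm ((d + 1 + N).choose (d + 2)), h1, show d + 1 + N = d + N + 1 by ring,
      Nat.choose_succ_succ]
    exact Nat.add_comm _ _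

lemma HH_one (d : ℕ) : HH d 1 = 0 := by
  have := HH_choose d 0
  simpa using this

lemma exists_block (d c : ℕ) : ∃ N r, r < (d + 1 + N).choose (d + 1) ∧
    c = (d + 1 + N).choose (d + 2) + r := by
  set N := Nat.findGreatest (fun M => (d + 1 + M).choose (d + 2) ≤ c) c with hN
  have h := (Nat.findGreatest_eq_iff (P := fun M => (d + 1 + M).choose (d + 2) ≤ c)).1 hN.symm
  have h1 : (d + 1 + N).choose (d + 2) ≤ c := by
    by_cases h0 : N = 0
    · rw [h0]; simp
    · exact h.2.1 h0
  refine ⟨N, c - (d + 1 + N).choose (d + 2), ?_, by omega⟩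
  have := pascal1 d N
  have h3 : c < (d + 1 + (N + 1)).choose (d + 2) := by
    by_contra hcon
    push Not at hcon
    have := choose_ge_self d (N + 1)
    exact h.2.2 (Nat.lt_succ_self N) (by omega) hcon
  omega

lemma HH_step (d c : ℕ) : HH d c ≤ HH d (c + 1) ∧ HH d (c + 1) ≤ HH d c + 1 := by
  induction d generalizing c with
  | zero => simp [HH]; omega
  | succ d ih =>
    obtain ⟨N, r, hr, rfl⟩ := exists_block d c
    rw [HH_block d N r hr.le, add_assoc, HH_block d N (r + 1) hr]
    have := ih r
    omega

lemma HH_mono (d : ℕ) : Monotone (HH d) := monotone_nat_of_le_succ fun c => (HH_step d c).1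

lemma HH_le (d c : ℕ) : HH d c ≤ c := by
  induction c with
  | zero => simp [HH_zero]
  | succ c ih => have := (HH_step d c).2; omega

lemma FF_mono (d : ℕ) : Monotone (fun c => c - HH d c) := monotone_nat_of_le_succ fun c => by
  have := HH_step d c
  have := HH_le d c
  have := HH_le d (c+1)
  show c - HH d c ≤ c + 1 - HH d (c+1)
  omega

lemma HH_last (d N : ℕ) (hN : 1 ≤ N) :
    HH d ((d + 1 + N).choose (d + 1) - 1) + 1 ≤ (d + N).choose (d + 1) := by
  induction d with
  | zero => simp [HH]; omega
  | succ d ih =>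
    have h1 : (d + 1 + 1 + N).choose (d + 2) = (d+1+N).choose (d+1) + (d+1+N).choose (d+2) := by
      rw [show d + 1 + 1 + N = d + 1 + (N + 1) by ring]; exact pascal1 d N
    have hp : 0 < (d + 1 + N).choose (d + 1) := Nat.choose_pos (by omega)
    rw [show (d + 1 + 1 + N).choose (d + 1 + 1) - 1 =
      (d + 1 + N).choose (d + 2) + ((d + 1 + N).choose (d + 1) - 1) by
        show (d + 1 + 1 + N).choose (d + 2) - 1 = _
        omega, HH_block _ _ _ (by omega)]
    have h2 : (d + 1 + N).choose (d + 1 + 1) = (d + N).choose (d + 1) + (d + N).choose (d + 2) := by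
      rw [show d + 1 + N = d + N + 1 by ring, Nat.choose_succ_succ]
    omega

lemma key_aux (d c : ℕ) (hc : 1 ≤ c) :
    HH d (c - HH (d + 1) c - 1) + 1 + HH (d + 1) (HH (d + 1) c + 1) ≤ HH (d + 1) c + 1 := by
  induction d generalizing c with
  | zero =>
    obtain ⟨N, r, hr, rfl⟩ := exists_block 0 c
    have hN : 1 ≤ N := by
      rcases Nat.eq_zero_or_pos N with rfl | h
      · simp at hr hc; omega
      · exact h
    obtain ⟨M, rfl⟩ : ∃ M, N = M + 1 := ⟨N - 1, by omega⟩
    rw [HH_block 0 _ r hr.le]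
    have e1 := pascal1 0 M
    have e2 := pascal1 0 (M+1)
    have e3 : ∀ s, s ≤ M + 1 → HH 1 ((M + 1).choose 2 + s) = M.choose 2 + HH 0 s := by
      intro s hs
      have := HH_block 0 M s (by simpa [add_comm] using hs)
      simpa [add_comm] using this
    have e4 : (M+1).choose 2 = M + M.choose 2 := by rw [Nat.choose_succ_succ]; simp
    have e5 : (M+2).choose 2 = M + 1 + (M + 1).choose 2 := by rw [Nat.choose_succ_succ]; simp
    simp only [zero_add, HH, Nat.choose_one_right] at *
    rw [show 1 + (M+1) = M + 2 by ring] at *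
    rw [add_assoc ((M+1).choose 2) (r-1) 1, e3 _ (by omega)]
    omega
  | succ d ih =>
    obtain ⟨N, r, hr, rfl⟩ := exists_block (d+1) c
    have hN : 1 ≤ N := by
      rcases Nat.eq_zero_or_pos N with rfl | h
      · simp at hr hc; omega
      · exact h
    obtain ⟨M, rfl⟩ : ∃ M, N = M + 1 := ⟨N - 1, by omega⟩
    rw [HH_block (d+1) _ r hr.le]
    have B1 : (d + 1 + 1 + (M + 1)).choose (d+1+2) = (d+1+(M+1)).choose (d+2) + (d+1+(M+1)).choose (d+1+2) := by
      rw [show d + 1 + 1 + (M+1) = d + 1 + (M + 1) + 1 by ring, Nat.choose_succ_succ]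
    have B2 : (d + 1 + (M + 1)).choose (d+1+2) = (d+1+M).choose (d+2) + (d+1+M).choose (d+1+2) := by
      rw [show d + 1 + (M+1) = d + 1 + M + 1 by ring, Nat.choose_succ_succ]
    have C1 : ∀ s, s ≤ (d + 1 + (M+1)).choose (d+2) →
        HH (d+2) ((d+1+(M+1)).choose (d+1+2) + s) = (d+1+M).choose (d+1+2) + HH (d+1) s := by
      intro s hs
      have := HH_block (d+1) M s (by
        rwa [show d + 1 + 1 + M = d + 1 + (M+1) by ring])
      rwa [show d + 1 + 1 + M = d + 1 + (M+1) by ring] at this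
    have C2 : ∀ s, s ≤ (d+1+(M+1)).choose (d+1) →
        HH (d+1) ((d+1+(M+1)).choose (d+2) + s) = (d+1+M).choose (d+2) + HH d s := by
      intro s hs
      have := HH_block d (M+1) s hs
      rwa [show d + (M+1) = d + 1 + M by ring] at this
    have hle := HH_le (d+1) r
    rcases Nat.eq_zero_or_pos r with rfl | hr0
    · rw [HH_zero]
      have hpos : 0 < (d+1+(M+1)).choose (d+2) := Nat.choose_pos (by omega)
      have h1 := HH_one (d+1)
      rw [add_zero, C1 1 hpos, h1]
      have h2 := C2 0 (Nat.zero_le _)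
      rw [HH_zero] at h2
      have h3 : HH (d+1) ((d + 1 + 1 + (M + 1)).choose (d+1+2) - ((d+1+(M+1)).choose (d+1+2) + 0) - 1)
        ≤ HH (d+1) ((d+1+(M+1)).choose (d+2) + 0) := HH_mono _ (by omega)
      omega
    · have I := ih r hr0
      have hlast := HH_last (d+1) (M+1) (by omega)
      have hm : HH (d+1) r ≤ HH (d+1) ((d + 1 + 1 + (M+1)).choose (d+1+1) - 1) :=
        HH_mono _ (by
          have : (d + 1 + 1 + (M+1)).choose (d+1+1) = (d + 1 + 1 + (M+1)).choose (d+2) := rfl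
          omega)
      rw [add_assoc ((d+1+(M+1)).choose (d+1+2)), C1 (HH (d+1) r + 1) (hm.trans' le_rfl |> fun h => by
        have : (d + 1 + (M+1)).choose (d+1+1) = (d + 1 + (M+1)).choose (d+2) := rfl
        omega)]
      have hF : r - HH (d+1) r ≤ (d+1+(M+1)).choose (d+1) := by
        have h5 := FF_mono (d+1) hr.le
        have h6 := HH_choose (d+1) (M+1)
        have h7 : (d + 1 + 1 + (M+1)).choose (d+1+1) = (d+1+(M+1)).choose (d+1) + (d+1+(M+1)).choose (d+1+1) := by
          rw [show d + 1 + 1 + (M+1) = d + 1 + (M + 1) + 1 by ring, Nat.choose_succ_succ]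
        simp only at h5
        omega
      have hlt : HH (d+1) r < r := by
        by_contra hcon
        have h8 := FF_mono (d+1) hr0
        have h1 := HH_one (d+1)
        simp [h1] at h8
        omega
      rw [show (d + 1 + 1 + (M + 1)).choose (d+1+2) + r - ((d+1+(M+1)).choose (d+1+2) + HH (d+1) r) - 1
        = (d+1+(M+1)).choose (d+2) + (r - HH (d+1) r - 1) by omega, C2 _ (by omega)]
      omega

lemma key_comb (d a b : ℕ) (h : a ≤ HH d b + HH (d + 1) a) : a ≤ HH (d + 1) (a + b) := by
  by_contra hcon
  push Not at hcon
  have hc : 1 ≤ a + b := by omega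
  have h1 := key_aux d (a + b) hc
  have h2 := FF_mono (d+1) (show HH (d+1) (a+b) + 1 ≤ a from hcon)
  have h3 : HH d b ≤ HH d (a + b - HH (d+1) (a+b) - 1) := HH_mono d (by omega)
  have h4 := HH_le (d+1) a
  have h5 := HH_le (d+1) (HH (d+1) (a+b) + 1)
  simp only at h2
  omega

/-- expansions -/
lemma rem_bound (N : ℕ → ℕ) (k e : ℕ) (hmono : ∀ i j, 1 ≤ i → i ≤ j → j ≤ k → N i ≤ N j)
    (he : k = 0 ∨ N k ≤ e) :
    ∑ i ∈ Finset.Icc 1 k, (i + N i - 1).choose i ≤ (k + e).choose k := by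
  induction k generalizing e with
  | zero => simp
  | succ k ih =>
    rw [Finset.sum_Icc_succ_top (by omega)]
    have he' : N (k+1) ≤ e := by simpa using he
    have h1 := ih e (fun i j a b c => hmono i j a b (by omega)) (by
      by_cases h : k = 0
      · exact Or.inl h
      · exact Or.inr ((hmono k (k+1) (by omega) (by omega) le_rfl).trans he'))
    have h2 : (k + 1 + N (k+1) - 1).choose (k+1) ≤ (k + e).choose (k+1) :=
      Nat.choose_le_choose _ (by omega)
    rw [show k + 1 + e = k + e + 1 by ring, Nat.choose_succ_succ']
    omega

lemma HH_expansion (N : ℕ → ℕ) (d : ℕ) (hmono : ∀ i j, 1 ≤ i → i ≤ j → j ≤ d + 1 → N i ≤ N j) :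
    HH d (∑ i ∈ Finset.Icc 1 (d+1), (i + N i - 1).choose i) =
      ∑ i ∈ Finset.Icc 1 (d+1), (i + N i - 2).choose i := by
  induction d with
  | zero => simp [HH]; omega
  | succ d ih =>
    have hm' : ∀ i j, 1 ≤ i → i ≤ j → j ≤ d + 1 → N i ≤ N j :=
      fun i j a b c => hmono i j a b (by omega)
    rw [Finset.sum_Icc_succ_top (b := d + 1) (by omega),
      Finset.sum_Icc_succ_top (b := d + 1) (by omega), ← ih hm',
      Nat.add_comm (∑ i ∈ Finset.Icc 1 (d+1), (i + N i - 1).choose i),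
      show d + 1 + 1 + N (d+1+1) - 1 = d + 1 + N (d+1+1) by omega, HH_block, Nat.add_comm ((d + N (d+1+1)).choose (d + 2)),
      show d + 1 + 1 + N (d+1+1) - 2 = d + N (d+1+1) by omega]
    exact rem_bound N (d+1) _ hm' (Or.inr (hmono _ _ (by omega) (by omega) le_rfl))
section LinAlgPart
open Module
lemma finrank_inf_ker_add {V : Type*} [AddCommGroup V] [Module ℂ V] (U : Submodule ℂ V)
    [FiniteDimensional ℂ U] (T : Module.End ℂ V) :
    finrank ℂ (U ⊓ LinearMap.ker T : Submodule ℂ V) + finrank ℂ (U.map T) = finrank ℂ U := by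
  have h := LinearMap.finrank_range_add_finrank_ker (T.domRestrict U)
  rw [LinearMap.range_domRestrict] at h
  have h2 : finrank ℂ (LinearMap.ker (T.domRestrict U)) =
      finrank ℂ (U ⊓ LinearMap.ker T : Submodule ℂ V) := by
    rw [LinearMap.ker_domRestrict, ← Submodule.finrank_map_subtype_eq]
    rw [Submodule.map_comap_subtype]
  omega

lemma rank_lsc {V : Type*} [AddCommGroup V] [Module ℂ V] (U : Submodule ℂ V)
    [FiniteDimensional ℂ U] (A B : Module.End ℂ V) :
    {t : ℂ | finrank ℂ (U.map (A + t • B)) < finrank ℂ (U.map A)}.Finite := by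
  set r := finrank ℂ (U.map A) with hr
  let b := Module.finBasis ℂ (U.map A)
  have hu : ∀ i, ∃ u ∈ U, A u = (b i : V) := fun i => by
    have := (b i).2
    exact Submodule.mem_map.1 this
  choose u huU huA using hu
  obtain ⟨π, hπ⟩ := Submodule.exists_isCompl (U.map A) |>.elim fun Q hQ =>
    (⟨(U.map A).projectionOnto Q hQ, fun x => Submodule.projectionOnto_apply_left hQ x⟩ :
      ∃ π : V →ₗ[ℂ] (U.map A), ∀ x : U.map A, π x = x)
  let M : Matrix (Fin r) (Fin r) ℂ := fun i j => b.repr (π (B (u i))) j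
  let p : Polynomial ℂ := (1 + (Polynomial.X : Polynomial ℂ) • M.map Polynomial.C).det
  have hp : ∀ t, p.eval t = (1 + t • M).det := by
    intro t
    simp only [p]
    rw [← Polynomial.coe_evalRingHom, RingHom.map_det]
    congr 1
    ext i j
    simp [Matrix.one_apply, Matrix.map_apply, apply_ite]
    exact mul_comm _ _
  have hp0 : p ≠ 0 := by
    intro h
    have := hp 0
    simp [h] at this
  refine (p.roots.toFinset.finite_toSet).subset ?_
  intro t ht
  simp only [Set.mem_ofPred_eq] at ht
  simp only [Finset.mem_coe, Multiset.mem_toFinset, Polynomial.mem_roots hp0, Polynomial.IsRoot]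
  by_contra hne
  rw [hp] at hne
  have hli : LinearIndependent ℂ (fun i => (1 + t • M) i) :=
    Matrix.linearIndependent_rows_of_det_ne_zero hne
  have hli2 : LinearIndependent ℂ (fun i => (A + t • B) (u i)) := by
    let φ : V →ₗ[ℂ] (Fin r → ℂ) := b.equivFun.toLinearMap ∘ₗ π
    refine LinearIndependent.of_comp φ ?_
    convert hli using 1
    ext i j
    simp [φ, M, huA, hπ, Matrix.one_apply, Finsupp.single_apply]
    rfl
  have hli3 : LinearIndependent ℂ (fun i => (⟨(A + t • B) (u i), Submodule.mem_map_of_mem (huU i)⟩ : U.map (A + t • B))) :=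
    LinearIndependent.of_comp (U.map (A + t • B)).subtype hli2
  have := hli3.fintype_card_le_finrank
  simp at this
  omega

lemma simul {V W : Type*} [AddCommGroup V] [Module ℂ V] [AddCommGroup W] [Module ℂ W]
    (D : W →ₗ[ℂ] Module.End ℂ V) (U₁ U₂ : Submodule ℂ V)
    [FiniteDimensional ℂ U₁] [FiniteDimensional ℂ U₂] (w₁ w₂ : W) :
    ∃ w, finrank ℂ (U₁ ⊓ LinearMap.ker (D w) : Submodule ℂ V) ≤
        finrank ℂ (U₁ ⊓ LinearMap.ker (D w₁) : Submodule ℂ V) ∧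
      finrank ℂ (U₂ ⊓ LinearMap.ker (D w) : Submodule ℂ V) ≤
        finrank ℂ (U₂ ⊓ LinearMap.ker (D w₂) : Submodule ℂ V) := by
  have f1 := rank_lsc U₁ (D w₁) (D w₂)
  have f2 := (rank_lsc U₂ (D w₂) (D w₁)).preimage (f := fun t : ℂ => t⁻¹) inv_injective.injOn
  obtain ⟨t, ht⟩ := ((f1.union f2).union (Set.finite_singleton (0:ℂ))).infinite_compl.nonempty
  simp only [Set.mem_compl_iff, Set.mem_union, Set.mem_ofPred_eq, Set.mem_preimage,
    Set.mem_singleton_iff, not_or, not_lt] at ht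
  obtain ⟨⟨h1, h2⟩, h0⟩ := ht
  refine ⟨w₁ + t • w₂, ?_, ?_⟩
  · have a1 := finrank_inf_ker_add U₁ (D w₁)
    have a2 := finrank_inf_ker_add U₁ (D (w₁ + t • w₂))
    rw [map_add, map_smul] at *
    omega
  · have a1 := finrank_inf_ker_add U₂ (D w₂)
    have a2 := finrank_inf_ker_add U₂ (D w₂ + t⁻¹ • D w₁)
    have : LinearMap.ker (D w₂ + t⁻¹ • D w₁) = LinearMap.ker (D (w₁ + t • w₂)) := by
      rw [← LinearMap.ker_smul (D w₂ + t⁻¹ • D w₁) t h0]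
      congr 1
      rw [map_add, map_smul, smul_add, smul_smul, mul_inv_cancel₀ h0, one_smul, add_comm]
    rw [← this]
    omega

end LinAlgPart

open Module in
/-- Green's hyperplane restriction theorem, dual form. -/
theorem green_dual {V W : Type*} [AddCommGroup V] [Module ℂ V] [AddCommGroup W] [Module ℂ W]
    [FiniteDimensional ℂ W]
    (D : W →ₗ[ℂ] Module.End ℂ V) (hcomm : ∀ w w' v, D w (D w' v) = D w' (D w v))
    (P : ℕ → Submodule ℂ V) (hP : ∀ k w v, v ∈ P (k + 1) → D w v ∈ P k)
    (hinj : ∀ k v, v ∈ P (k + 1) → (∀ w, D w v = 0) → v = 0) (d : ℕ) :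
    ∀ U : Submodule ℂ V, FiniteDimensional ℂ U → U ≤ P (d + 1) →
      ∃ w, finrank ℂ (U ⊓ LinearMap.ker (D w) : Submodule ℂ V) ≤ HH d (finrank ℂ U) := by
  have hlt : ∀ k (U : Submodule ℂ V), FiniteDimensional ℂ U → U ≤ P (k + 1) → U ≠ ⊥ →
      ∃ w, finrank ℂ (U ⊓ LinearMap.ker (D w) : Submodule ℂ V) < finrank ℂ U := by
    intro k U _ hU hne
    obtain ⟨u, hu, hu0⟩ := Submodule.exists_mem_ne_zero_of_ne_bot hne
    have : ∃ w, D w u ≠ 0 := by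
      by_contra hcon
      push Not at hcon
      exact hu0 (hinj k u (hU hu) hcon)
    obtain ⟨w, hw⟩ := this
    refine ⟨w, Submodule.finrank_lt_finrank_of_lt ?_⟩
    refine lt_of_le_of_ne inf_le_left fun h => hw ?_
    have : u ∈ U ⊓ LinearMap.ker (D w) := by rw [h]; exact hu
    exact this.2
  induction d with
  | zero =>
    intro U hf hU
    by_cases hne : U = ⊥
    · subst hne
      exact ⟨0, by rw [bot_inf_eq, finrank_bot]; exact Nat.zero_le _⟩
    · obtain ⟨w, hw⟩ := hlt 0 U hf hU hne
      exact ⟨w, by simp only [HH]; omega⟩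
  | succ d ihd =>
    let L : Submodule ℂ V → Submodule ℂ W := fun U =>
      { carrier := {w | ∀ u ∈ U, D w u = 0}
        add_mem' := fun {a b} ha hb u hu => by
          simp [ha u hu, hb u hu]
        zero_mem' := fun u hu => by simp
        smul_mem' := fun c a ha u hu => by simp [ha u hu] }
    have hL : ∀ U w, w ∈ L U ↔ ∀ u ∈ U, D w u = 0 := fun U w => Iff.rfl
    have main : ∀ m : ℕ, ∀ U : Submodule ℂ V, FiniteDimensional ℂ U → U ≤ P (d + 1 + 1) →
        finrank ℂ W ≤ m + finrank ℂ (L U) →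
        ∃ w, finrank ℂ (U ⊓ LinearMap.ker (D w) : Submodule ℂ V) ≤ HH (d+1) (finrank ℂ U) := by
      intro m
      induction m with
      | zero =>
        intro U hf hU hm
        have htop : L U = ⊤ := Submodule.eq_top_of_finrank_eq
          (le_antisymm (Submodule.finrank_le _) (by omega))
        have hbot : U = ⊥ := by
          rw [Submodule.eq_bot_iff]
          intro u hu
          refine hinj _ u (hU hu) fun w => ?_
          have : w ∈ L U := htop ▸ Submodule.mem_top
          exact this u hu
        subst hbot
        exact ⟨0, by rw [bot_inf_eq, finrank_bot]; exact Nat.zero_le _⟩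
      | succ m ihm =>
        intro U hf hU hm
        by_cases hne : U = ⊥
        · subst hne
          exact ⟨0, by rw [bot_inf_eq, finrank_bot]; exact Nat.zero_le _⟩
        let φ : W → ℕ := fun w => finrank ℂ (U ⊓ LinearMap.ker (D w) : Submodule ℂ V)
        obtain ⟨l, hl⟩ : ∃ l, ∀ w, φ l ≤ φ w :=
          ⟨Function.argmin φ, fun w => Function.argmin_le φ w⟩
        refine ⟨l, ?_⟩
        have hlL : l ∉ L U := by
          intro hmem
          obtain ⟨w, hw⟩ := hlt _ U hf hU hne
          have h1 : U ⊓ LinearMap.ker (D l) = U := inf_eq_left.2 fun u hu => hmem u hu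
          have h2 : finrank ℂ (U ⊓ LinearMap.ker (D l) : Submodule ℂ V) ≤
            finrank ℂ (U ⊓ LinearMap.ker (D w) : Submodule ℂ V) := hl w
          rw [h1] at h2
          omega
        have hrk := finrank_inf_ker_add U (D l)
        set U' := U ⊓ LinearMap.ker (D l) with hU'
        have : FiniteDimensional ℂ U' := Submodule.finiteDimensional_inf_left _ _
        have hLlt : L U < L U' := by
          refine lt_of_le_of_ne (fun w hw u hu => hw u hu.1) fun h => hlL ?_
          rw [h]
          exact fun u hu => hu.2
        have hfr := Submodule.finrank_lt_finrank_of_lt hLlt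
        obtain ⟨w₁, hw₁⟩ := ihm U' this (inf_le_left.trans hU) (by omega)
        obtain ⟨w₂, hw₂⟩ := ihd (U.map (D l)) inferInstance (by
          rintro _ ⟨u, hu, rfl⟩
          exact hP _ _ _ (hU hu))
        obtain ⟨w, h1, h2⟩ := simul D U' (U.map (D l)) w₁ w₂
        have h3 : finrank ℂ U' ≤
            finrank ℂ (U ⊓ LinearMap.ker (D w) : Submodule ℂ V) := hl w
        have : FiniteDimensional ℂ (U ⊓ LinearMap.ker (D w) : Submodule ℂ V) :=
          Submodule.finiteDimensional_inf_left _ _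
        have h4 := finrank_inf_ker_add (U ⊓ LinearMap.ker (D w)) (D l)
        have h5 : U ⊓ LinearMap.ker (D w) ⊓ LinearMap.ker (D l) = U' ⊓ LinearMap.ker (D w) :=
          inf_right_comm _ _ _
        have : FiniteDimensional ℂ (U.map (D l) ⊓ LinearMap.ker (D w) : Submodule ℂ V) :=
          Submodule.finiteDimensional_inf_left _ _
        have h6 : finrank ℂ ((U ⊓ LinearMap.ker (D w)).map (D l)) ≤
            finrank ℂ (U.map (D l) ⊓ LinearMap.ker (D w) : Submodule ℂ V) := by
          refine Submodule.finrank_mono ?_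
          rintro _ ⟨u, hu, rfl⟩
          refine ⟨Submodule.mem_map_of_mem hu.1, ?_⟩
          have hz : D w u = 0 := hu.2
          show D w (D l u) = 0
          rw [hcomm, hz, map_zero]
        rw [h5] at h4
        rw [← hrk]
        exact key_comb d _ _ (by omega)
    intro U hf hU
    exact main (finrank ℂ W) U hf hU (by omega)

section AlgebraPart
open MvPolynomial Module

lemma finrank_dualAnn {E : Type*} [AddCommGroup E] [Module ℂ E] (J K : Submodule ℂ E)
    [FiniteDimensional ℂ K] (hJK : J ⊔ K = ⊤) :
    FiniteDimensional ℂ J.dualAnnihilator ∧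
    finrank ℂ J.dualAnnihilator = finrank ℂ K - finrank ℂ (J ⊓ K : Submodule ℂ E) := by
  let f : K →ₗ[ℂ] E ⧸ J := J.mkQ ∘ₗ K.subtype
  have hsurj : Function.Surjective f := by
    rw [← LinearMap.range_eq_top, LinearMap.range_comp, Submodule.range_subtype,
      Submodule.map_mkQ_eq_top]
    exact hJK
  have : FiniteDimensional ℂ (E ⧸ J) := Module.Finite.of_surjective f hsurj
  have e := J.dualQuotEquivDualAnnihilator
  have h1 : finrank ℂ J.dualAnnihilator = finrank ℂ (E ⧸ J) := by
    rw [← e.finrank_eq, Subspace.dual_finrank_eq]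
  refine ⟨Module.Finite.equiv e, ?_⟩
  have h2 := LinearMap.finrank_range_add_finrank_ker f
  rw [LinearMap.range_eq_top.2 hsurj, finrank_top] at h2
  have h3 : finrank ℂ (LinearMap.ker f) = finrank ℂ (J ⊓ K : Submodule ℂ E) := by
    rw [LinearMap.ker_comp, Submodule.ker_mkQ, ← Submodule.finrank_map_subtype_eq,
      Submodule.map_comap_subtype, inf_comm]
  omega

variable {n : ℕ}

/-- the degree `k` dual of the ideal. -/
noncomputable def JJ (I : Ideal (MvPolynomial (Fin (n + 1)) ℂ)) (k : ℕ) :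
    Submodule ℂ (MvPolynomial (Fin (n + 1)) ℂ) :=
  Submodule.restrictScalars ℂ I ⊔ LinearMap.ker (homogeneousComponent (R := ℂ) k)

lemma hc_idem (k : ℕ) (f : MvPolynomial (Fin (n + 1)) ℂ) :
    homogeneousComponent k (homogeneousComponent k f) = homogeneousComponent k f := by
  rw [homogeneousComponent_of_mem (homogeneousComponent_mem k f), if_pos rfl]

lemma JJ_sup (I : Ideal (MvPolynomial (Fin (n + 1)) ℂ)) (k : ℕ) :
    JJ I k ⊔ homogeneousSubmodule (Fin (n + 1)) ℂ k = ⊤ := by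
  rw [eq_top_iff]
  intro f _
  have : f = (f - homogeneousComponent k f) + homogeneousComponent k f := by ring
  rw [this]
  refine Submodule.add_mem_sup (Submodule.mem_sup_right ?_) (homogeneousComponent_mem k f)
  rw [LinearMap.mem_ker, map_sub, hc_idem, sub_self]

lemma JJ_inf (I : Ideal (MvPolynomial (Fin (n + 1)) ℂ)) (hI : IsHomogeneousIdeal I) (k : ℕ) :
    JJ I k ⊓ homogeneousSubmodule (Fin (n + 1)) ℂ k =
      Submodule.restrictScalars ℂ I ⊓ homogeneousSubmodule (Fin (n + 1)) ℂ k := by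
  refine le_antisymm ?_ (inf_le_inf_right _ le_sup_left)
  rintro f ⟨hf, hk⟩
  refine ⟨?_, hk⟩
  obtain ⟨a, ha, b, hb, rfl⟩ := Submodule.mem_sup.1 hf
  have h1 : homogeneousComponent k (a + b) = a + b := by
    rw [homogeneousComponent_of_mem hk, if_pos rfl]
  rw [map_add, LinearMap.mem_ker.1 hb, add_zero] at h1
  rw [← h1]
  exact hI a ha k

instance finDimHom (k : ℕ) : FiniteDimensional ℂ (homogeneousSubmodule (Fin (n + 1)) ℂ k) :=
  Module.Finite.iff_fg.2 (homogeneousSubmodule_fg _ _ k)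

lemma hilbert_eq (I : Ideal (MvPolynomial (Fin (n + 1)) ℂ)) (hI : IsHomogeneousIdeal I) (k : ℕ) :
    FiniteDimensional ℂ (JJ I k).dualAnnihilator ∧
    finrank ℂ (JJ I k).dualAnnihilator = hilbertFn I k := by
  have := finrank_dualAnn (JJ I k) _ (JJ_sup I k)
  rwa [JJ_inf I hI] at this

/-- linear form with coefficients `w`. -/
noncomputable def linForm : (Fin (n + 1) → ℂ) →ₗ[ℂ] MvPolynomial (Fin (n + 1)) ℂ :=
  Fintype.linearCombination ℂ (fun i => X i)

/-- contraction by linear forms. -/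
noncomputable def DD : (Fin (n + 1) → ℂ) →ₗ[ℂ] Module.End ℂ (Dual ℂ (MvPolynomial (Fin (n + 1)) ℂ)) :=
  LinearMap.mk₂ ℂ (fun w φ => φ ∘ₗ LinearMap.mulLeft ℂ (linForm w))
    (fun a b φ => by ext; simp [add_mul])
    (fun c a φ => by ext; simp)
    (fun a φ ψ => by ext; simp)
    (fun c a φ => by ext; simp)

lemma DD_apply (w : Fin (n + 1) → ℂ) (φ : Dual ℂ (MvPolynomial (Fin (n + 1)) ℂ)) (f) :
    DD w φ f = φ (linForm w * f) := rfl

lemma linForm_hom (w : Fin (n + 1) → ℂ) : (linForm w).IsHomogeneous 1 := by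
  rw [linForm, Fintype.linearCombination_apply]
  refine IsHomogeneous.sum _ _ _ fun i _ => ?_
  rw [smul_eq_C_mul]
  simpa using (isHomogeneous_C _ (w i)).mul (isHomogeneous_X ℂ i)

lemma linForm_single (i : Fin (n + 1)) : linForm (Pi.single i (1:ℂ)) = X i := by
  simp [linForm]

lemma hc_mul (w : Fin (n + 1) → ℂ) (k : ℕ) (f : MvPolynomial (Fin (n + 1)) ℂ)
    (hf : homogeneousComponent k f = 0) : homogeneousComponent (k + 1) (linForm w * f) = 0 := by
  rw [← sum_homogeneousComponent f, Finset.mul_sum, map_sum]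
  refine Finset.sum_eq_zero fun i _ => ?_
  rw [homogeneousComponent_of_mem ((linForm_hom w).mul (homogeneousComponent_isHomogeneous i f))]
  split_ifs with h
  · obtain rfl : k = i := by omega
    simp [hf]
  · rfl

lemma DD_mem (I : Ideal (MvPolynomial (Fin (n + 1)) ℂ)) (k : ℕ) (w : Fin (n + 1) → ℂ)
    (φ) (hφ : φ ∈ (JJ I (k + 1)).dualAnnihilator) : DD w φ ∈ (JJ I k).dualAnnihilator := by
  rw [Submodule.mem_dualAnnihilator] at *
  intro f hf
  rw [DD_apply]
  refine hφ _ ?_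
  obtain ⟨a, ha, b, hb, rfl⟩ := Submodule.mem_sup.1 hf
  rw [mul_add]
  exact Submodule.add_mem_sup (I.mul_mem_left _ ha) (hc_mul w k b hb)

lemma DD_inj (I : Ideal (MvPolynomial (Fin (n + 1)) ℂ)) (k : ℕ)
    (φ) (hφ : φ ∈ (JJ I (k + 1)).dualAnnihilator) (h : ∀ w, DD w φ = 0) : φ = 0 := by
  rw [Submodule.mem_dualAnnihilator] at hφ
  refine (basisMonomials (Fin (n + 1)) ℂ).ext fun m => ?_
  rw [coe_basisMonomials, LinearMap.zero_apply]
  by_cases hm : m = 0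
  · subst hm
    refine hφ _ (Submodule.mem_sup_right ?_)
    rw [LinearMap.mem_ker, homogeneousComponent_of_mem (n := 0) (isHomogeneous_monomial _ (by simp))]
    simp
  · obtain ⟨i, hi⟩ := Finsupp.ne_iff.1 hm
    have h1 : (monomial m (1:ℂ)) = X i * monomial (m - Finsupp.single i 1) 1 := by
      rw [X, monomial_mul, one_mul, add_tsub_cancel_of_le]
      rw [Finsupp.single_le_iff]
      exact Nat.one_le_iff_ne_zero.2 hi
    show φ (monomial m 1) = 0
    rw [h1, ← linForm_single, ← DD_apply, h]
    rfl

end AlgebraPart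

theorem hilbert_fn_lower_bound_below (n d : ℕ) (hd : 2 ≤ d)
    (I : Ideal (MvPolynomial (Fin (n + 1)) ℂ)) (hI : IsHomogeneousIdeal I)
    (c : ℕ) (hc : c = hilbertFn I d)
    (ε : ℕ → ℤ) (hε : IsMacaulayExpansion c d ε) :
    hilbertFn I (d - 1) ≥ ∑ i ∈ Finset.Icc 2 d, (((i : ℤ) + ε i - 1).toNat).choose (i - 1) ∧
    (0 ≤ ε 1 →
      hilbertFn I (d - 1) > ∑ i ∈ Finset.Icc 2 d, (((i : ℤ) + ε i - 1).toNat).choose (i - 1)) := by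
  obtain ⟨e, rfl⟩ : ∃ e, d = e + 1 := ⟨d - 1, by omega⟩
  obtain ⟨h1, h2, h3⟩ := hε
  obtain ⟨fd, hfd⟩ := hilbert_eq I hI (e + 1)
  obtain ⟨fe, hfe⟩ := hilbert_eq I hI e
  obtain ⟨w, hw⟩ := green_dual (DD (n := n))
    (fun w w' φ => by
      refine LinearMap.ext fun f => ?_
      show φ (linForm w' * (linForm w * f)) = φ (linForm w * (linForm w' * f))
      rw [mul_left_comm]) (fun k => (JJ I k).dualAnnihilator)
    (fun k w φ h => DD_mem I k w φ h) (fun k φ h h' => DD_inj I k φ h h') e _ fd le_rfl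
  have hadd := finrank_inf_ker_add (JJ I (e+1)).dualAnnihilator (DD w)
  have hle : Module.finrank ℂ ((JJ I (e+1)).dualAnnihilator.map (DD w)) ≤ hilbertFn I e := by
    rw [← hfe]
    refine Submodule.finrank_mono ?_
    rintro _ ⟨φ, hφ, rfl⟩
    exact DD_mem I e w φ hφ
  rw [hfd, ← hc] at hw hadd
  let N : ℕ → ℕ := fun i => (ε i + 1).toNat
  have hN : ∀ i, 1 ≤ i → i ≤ e + 1 → (N i : ℤ) = ε i + 1 := fun i a b => by
    have := h1 i a b
    simp only [N]
    omega
  have hcN : c = ∑ i ∈ Finset.Icc 1 (e+1), (i + N i - 1).choose i := by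
    rw [h3]
    refine Finset.sum_congr rfl fun i hi => ?_
    rw [Finset.mem_Icc] at hi
    have := hN i hi.1 hi.2
    congr 1
    omega
  have hexp := HH_expansion N e (fun i j a b c => by
    have := h2 i j a b c
    have := hN i a (by omega)
    have := hN j (by omega) c
    omega)
  rw [← hcN] at hexp
  have hS : ∑ i ∈ Finset.Icc 2 (e+1), (((i : ℤ) + ε i - 1).toNat).choose (i - 1) =
      ∑ i ∈ Finset.Icc 2 (e+1), (i + N i - 2).choose (i - 1) := by
    refine Finset.sum_congr rfl fun i hi => ?_
    rw [Finset.mem_Icc] at hi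
    have := hN i (by omega) hi.2
    congr 1
    omega
  have hsplit : ∀ g : ℕ → ℕ, ∑ i ∈ Finset.Icc 1 (e+1), g i = g 1 + ∑ i ∈ Finset.Icc 2 (e+1), g i := by
    intro g
    rw [← Finset.add_sum_Ioc_eq_sum_Icc (by omega)]
    rfl
  have hpas : ∑ i ∈ Finset.Icc 2 (e+1), (i + N i - 1).choose i =
      ∑ i ∈ Finset.Icc 2 (e+1), (i + N i - 2).choose (i - 1) +
      ∑ i ∈ Finset.Icc 2 (e+1), (i + N i - 2).choose i := by
    rw [← Finset.sum_add_distrib]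
    refine Finset.sum_congr rfl fun i hi => ?_
    rw [Finset.mem_Icc] at hi
    obtain ⟨j, rfl⟩ : ∃ j, i = j + 2 := ⟨i - 2, by omega⟩
    rw [show j + 2 + N (j+2) - 1 = (j + N (j+2)) + 1 by omega,
      show j + 2 + N (j+2) - 2 = j + N (j+2) by omega, Nat.choose_succ_succ]
    rfl
  rw [hsplit, hpas] at hcN
  rw [hsplit] at hexp
  have hN1 := hN 1 le_rfl (by omega)
  simp only [Nat.choose_one_right] at hcN hexp
  rw [hS, Nat.add_sub_cancel]
  constructor
  · omega
  · intro h0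
    omega
end

section
/- (Gotzmann persistence) Let S = ℂ[x_0, …, x_n], let d ≥ 1, let V ⊆ S_d be a ℂ-linear subspace and let J ⊆ S be the ideal generated by V. Set c = h_J(d) and let (ε_d, …, ε_1) be the Macaulay expansion of c in base d. If h_J(d+1) = c^{⟨d⟩} = Σ_{i=1}^d C(i+ε_i+1, i+1), then for every k ≥ d one has h_J(k+1) = (h_J(k))^{⟨k⟩}; that is, if (δ_k, …, δ_1) is the Macaulay expansion of h_J(k) in base k, then h_J(k+1) = Σ_{i=1}^k C(i+δ_i+1, i+1). -/
open MvPolynomial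

namespace GP

/-- `k` is strictly increasing on `{0,…,d-1}`. -/
def Inc (d : ℕ) (k : ℕ → ℕ) : Prop := ∀ i j, i < j → j < d → k i < k j

/-- value of a cascade -/
def A (d : ℕ) (k : ℕ → ℕ) : ℕ := ∑ i ∈ Finset.range d, (k i).choose (i + 1)
/-- Green function of a cascade -/
def Gs (d : ℕ) (k : ℕ → ℕ) : ℕ := ∑ i ∈ Finset.range d, (k i - 1).choose (i + 1)
/-- Macaulay function of a cascade -/
def Ms (d : ℕ) (k : ℕ → ℕ) : ℕ := ∑ i ∈ Finset.range d, (k i + 1).choose (i + 2)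

lemma A_succ (d k) : A (d + 1) k = A d k + (k d).choose (d + 1) := Finset.sum_range_succ _ _
lemma Gs_succ (d k) : Gs (d + 1) k = Gs d k + (k d - 1).choose (d + 1) := Finset.sum_range_succ _ _
lemma Ms_succ (d k) : Ms (d + 1) k = Ms d k + (k d + 1).choose (d + 2) := Finset.sum_range_succ _ _

lemma Inc.pred {d k} (h : Inc (d + 1) k) : Inc d k := fun i j hij hj => h i j hij (by omega)
lemma Inc.top {d k} (h : Inc (d + 1) k) : ∀ i < d, k i < k d := fun i hi => h i d hi (by omega)
lemma Inc.le {d k} (h : Inc d k) : ∀ i < d, i ≤ k i := by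
  intro i
  induction i with
  | zero => intro _; exact Nat.zero_le _
  | succ i ih =>
    intro hi
    have := ih (by omega)
    have := h i (i + 1) (by omega) hi
    omega

lemma pascal (a b : ℕ) (ha : 1 ≤ a) : a.choose (b + 1) = (a - 1).choose b + (a - 1).choose (b + 1) := by
  obtain ⟨a, rfl⟩ := Nat.exists_eq_add_of_le' ha
  simp [Nat.choose_succ_succ]

lemma A_lt : ∀ (d K : ℕ) (k : ℕ → ℕ), Inc d k → (∀ i < d, k i < K) → d ≤ K → A d k < K.choose d := by
  intro d
  induction d with
  | zero => intro K k _ _ _; simp [A]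
  | succ d ih =>
    intro K k hk hK hd
    have h1 := ih (k d) k hk.pred hk.top (hk.le d (by omega))
    have h2 : (k d + 1).choose (d + 1) ≤ K.choose (d + 1) :=
      Nat.choose_le_choose _ (hK d (by omega))
    rw [Nat.choose_succ_succ] at h2
    rw [A_succ]
    simp only [Nat.succ_eq_add_one] at *
    omega

lemma A_lt' {d k} (hk : Inc (d + 1) k) : A (d + 1) k < (k d + 1).choose (d + 1) := by
  apply A_lt _ _ _ hk
  · intro i hi
    rcases Nat.lt_succ_iff_lt_or_eq.mp hi with h | h
    · have := hk.top i h; omega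
    · subst h; omega
  · have := hk.le d (by omega); omega

lemma Ms_lt : ∀ (d K : ℕ) (k : ℕ → ℕ), Inc d k → (∀ i < d, k i < K) → d ≤ K →
    Ms d k < (K + 1).choose (d + 1) := by
  intro d
  induction d with
  | zero => intro K k _ _ _; simp [Ms]
  | succ d ih =>
    intro K k hk hK hd
    have h1 := ih (k d) k hk.pred hk.top (hk.le d (by omega))
    have h2 : (k d + 1 + 1).choose (d + 1 + 1) ≤ (K + 1).choose (d + 1 + 1) :=
      Nat.choose_le_choose _ (by have := hK d (by omega); omega)
    rw [Nat.choose_succ_succ] at h2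
    rw [Ms_succ]
    simp only [Nat.succ_eq_add_one, Nat.add_assoc, Nat.reduceAdd] at *
    omega

lemma Gs_le_A (d k) : Gs d k ≤ A d k :=
  Finset.sum_le_sum fun i _ => Nat.choose_le_choose _ (by omega)

lemma Gs_le {d k} : Inc (d + 1) k → Gs (d + 1) k ≤ (k d).choose (d + 1) := by
  induction d with
  | zero => intro _; simp [Gs]
  | succ d ih =>
    intro hk
    have h1 := ih hk.pred
    have h2 := hk.top d (by omega)
    rw [Gs_succ, pascal (k (d + 1)) (d + 1) (by omega)]
    have : (k d).choose (d + 1) ≤ (k (d + 1) - 1).choose (d + 1) :=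
      Nat.choose_le_choose _ (by omega)
    omega

lemma A_cmp {d k l} (hl : Inc (d + 1) l) (h : l d < k d) : A (d + 1) l < A (d + 1) k := by
  have h1 := A_lt' hl
  have h2 : (l d + 1).choose (d + 1) ≤ (k d).choose (d + 1) := Nat.choose_le_choose _ h
  rw [A_succ d k]
  omega

lemma uniq : ∀ (d : ℕ) (k l : ℕ → ℕ), Inc d k → Inc d l → A d k = A d l → ∀ i < d, k i = l i := by
  intro d
  induction d with
  | zero => intro k l _ _ _ i hi; omega
  | succ d ih =>
    intro k l hk hl h i hi
    rcases lt_trichotomy (k d) (l d) with h1 | h1 | h1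
    · have := A_cmp hk h1; omega
    · rw [A_succ, A_succ, h1] at h
      rcases Nat.lt_succ_iff_lt_or_eq.mp hi with h2 | h2
      · exact ih k l hk.pred hl.pred (by omega) i h2
      · subst h2; exact h1
    · have := A_cmp hl h1; omega

lemma Gs_mono : ∀ (d : ℕ) (k l : ℕ → ℕ), Inc d k → Inc d l → A d k ≤ A d l → Gs d k ≤ Gs d l := by
  intro d
  induction d with
  | zero => intro k l _ _ _; simp [Gs]
  | succ d ih =>
    intro k l hk hl h
    rcases lt_trichotomy (k d) (l d) with h1 | h1 | h1
    · have h2 := Gs_le hk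
      have h3 : (k d).choose (d + 1) ≤ (l d - 1).choose (d + 1) :=
        Nat.choose_le_choose _ (by omega)
      rw [Gs_succ d l]; omega
    · rw [A_succ, A_succ, h1] at h
      have := ih k l hk.pred hl.pred (by omega)
      rw [Gs_succ, Gs_succ, h1]; omega
    · have := A_cmp hl h1; omega

lemma Ms_smono : ∀ (d : ℕ) (k l : ℕ → ℕ), Inc d k → Inc d l → A d k < A d l → Ms d k < Ms d l := by
  intro d
  induction d with
  | zero => intro k l _ _ h; simp [A] at h
  | succ d ih =>
    intro k l hk hl h
    rcases lt_trichotomy (k d) (l d) with h1 | h1 | h1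
    · have h2 := Ms_lt (d + 1) (l d) k hk (by
        intro i hi
        rcases Nat.lt_succ_iff_lt_or_eq.mp hi with h | h
        · have := hk.top i h; omega
        · subst h; omega) (by have := hk.le d (by omega); omega)
      rw [Ms_succ d l]; simp only [Nat.add_assoc, Nat.reduceAdd] at *; omega
    · rw [A_succ, A_succ, h1] at h
      have := ih k l hk.pred hl.pred (by omega)
      rw [Ms_succ, Ms_succ, h1]; omega
    · have := A_cmp hl h1; omega

lemma N4 : ∀ (d : ℕ) (k l : ℕ → ℕ), Inc d k → Inc (d + 1) l → Ms d k < A (d + 1) l →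
    A d k + Gs (d + 1) l < A (d + 1) l := by
  intro d
  induction d with
  | zero => intro k l _ _ h; simp [A, Gs] at *; omega
  | succ d ih =>
    intro k l hk hl h
    rcases lt_trichotomy (l (d + 1)) (k d + 1) with h1 | h1 | h1
    · have h2 := A_lt' hl
      have h3 : (l (d + 1) + 1).choose (d + 1 + 1) ≤ (k d + 1).choose (d + 1 + 1) :=
        Nat.choose_le_choose _ h1
      rw [Ms_succ] at h
      simp only [Nat.reduceAdd, Nat.add_assoc] at *
      omega
    · rw [Ms_succ, A_succ (d + 1) l, h1] at h
      have := ih k l hk.pred hl.pred (by simp only [Nat.reduceAdd, Nat.add_assoc] at *; omega)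
      rw [A_succ (d + 1) l, A_succ d k, Gs_succ (d + 1) l, h1, Nat.choose_succ_succ (k d)]
      simp only [Nat.succ_eq_add_one, Nat.add_sub_cancel] at *
      omega
    · have h2 := A_lt' hk
      have h3 : (k d + 1).choose (d + 1) ≤ (l (d + 1) - 1).choose (d + 1) :=
        Nat.choose_le_choose _ (by omega)
      have h4 := Gs_le_A (d + 1) l
      rw [A_succ (d + 1) l, Gs_succ (d + 1) l, pascal (l (d + 1)) (d + 1) (by omega)]
      omega

/-- raise the trivial terms of a cascade, subtract one -/
def low (k : ℕ → ℕ) : ℕ → ℕ := fun i => max (k i) (i + 1) - 1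

lemma low_inc {d k} (hk : Inc d k) : Inc d (low k) := by
  intro i j hij hj
  have := hk i j hij hj
  simp only [low]
  omega

lemma choose_zero_of_lt {a b : ℕ} (h : a < b) : a.choose b = 0 := Nat.choose_eq_zero_of_lt h

lemma low_cases (k : ℕ → ℕ) (i : ℕ) (h : i ≤ k i) :
    (low k i + 1 = k i) ∨ (k i = i ∧ low k i = i) := by
  simp only [low]; omega

lemma A_low {d k} (hk : Inc d k) : A d (low k) = Gs d k := by
  apply Finset.sum_congr rfl
  intro i hi
  rcases low_cases k i (hk.le i (Finset.mem_range.mp hi)) with h | ⟨h1, h2⟩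
  · rw [← h]; rfl
  · rw [h1, h2, choose_zero_of_lt (by omega), choose_zero_of_lt (by omega)]

lemma N5 (d : ℕ) (k l p : ℕ → ℕ) (hk : Inc (d + 1) k) (hl : Inc (d + 1) l) (hp : Inc d p)
    (hs : A (d + 1) k = A (d + 1) l + A d p)
    (h : A (d + 1) l ≤ Gs d p + Gs (d + 1) l) : A (d + 1) l ≤ Gs (d + 1) k := by
  by_contra hcon
  rw [not_le, ← A_low hk] at hcon
  set q := low k with hq
  have hqi : Inc (d + 1) q := low_inc hk
  set r : ℕ → ℕ := fun i => q (i + 1) with hr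
  have hri : Inc d r := fun i j hij hj => hqi (i + 1) (j + 1) (by omega) (by omega)
  have h1 : A (d + 1) k ≤ A (d + 1) q + 1 + A d r := by
    have : A (d + 1) k ≤ ∑ i ∈ Finset.range (d + 1), ((q i).choose (i + 1) + (q i).choose i) := by
      apply Finset.sum_le_sum
      intro i hi
      calc (k i).choose (i + 1) ≤ (q i + 1).choose (i + 1) :=
            Nat.choose_le_choose _ (by simp only [hq, low]; omega)
        _ = _ := by rw [Nat.choose_succ_succ, add_comm]
    rw [Finset.sum_add_distrib, Finset.sum_range_succ' (fun i => (q i).choose i)] at this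
    simp only [A, hr] at *
    simp only [Nat.choose_zero_right] at this
    omega
  have h2 : Gs d p ≤ Gs d r := Gs_mono d p r hp hri (by omega)
  set s : ℕ → ℕ := fun i => q (i + 1) - 1 with hsd
  have hpos : ∀ i, i < d → 1 ≤ q (i + 1) := fun i hi => by
    have := hqi i (i + 1) (by omega) (by omega); omega
  have hsi : Inc d s := fun i j hij hj => by
    have := hqi (i + 1) (j + 1) (by omega) (by omega)
    have := hpos i (by omega)
    simp only [hsd]; omega
  have h3 : Ms d s ≤ A (d + 1) q := by
    unfold A Ms
    rw [Finset.sum_range_succ']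
    refine le_trans (Finset.sum_le_sum (g := fun i => (q (i + 1)).choose (i + 1 + 1)) ?_) (Nat.le_add_right _ _)
    intro i hi
    have := hpos i (Finset.mem_range.mp hi)
    simp only [hsd]
    rw [Nat.sub_add_cancel this]
  have h4 := N4 d s l hsi hl (by omega)
  have h5 : A d s = Gs d r := rfl
  omega

lemma exists_exp_lt : ∀ (d K c : ℕ), c < K.choose d →
    ∃ k, Inc d k ∧ (∀ i < d, k i < K) ∧ A d k = c := by
  intro d
  induction d with
  | zero =>
    intro K c hc
    exact ⟨fun _ => 0, fun i j _ hj => by omega, fun i hi => by omega, by simp [A] at *; omega⟩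
  | succ d ihd =>
    intro K
    induction K with
    | zero => intro c hc; simp at hc
    | succ K ihK =>
      intro c hc
      by_cases h : c < K.choose (d + 1)
      · obtain ⟨k, h1, h2, h3⟩ := ihK c h
        exact ⟨k, h1, fun i hi => (h2 i hi).trans (Nat.lt_succ_self _), h3⟩
      · rw [Nat.choose_succ_succ] at hc
        obtain ⟨k, h1, h2, h3⟩ := ihd K (c - K.choose (d + 1)) (by
          simp only [Nat.succ_eq_add_one] at *; omega)
        refine ⟨fun i => if i < d then k i else K, ?_, ?_, ?_⟩
        · intro i j hij hj
          by_cases hjd : j < d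
          · have : i < d := by omega
            simp only [this, hjd, if_true]; exact h1 i j hij hjd
          · have : i < d := by omega
            simp only [this, hjd, if_true, if_false]; exact h2 i this
        · intro i hi
          by_cases hid : i < d
          · simp only [hid, if_true]; exact (h2 i hid).trans (Nat.lt_succ_self _)
          · simp only [hid, if_false]; omega
        · rw [A_succ]
          have : A d (fun i => if i < d then k i else K) = A d k := by
            apply Finset.sum_congr rfl
            intro i hi
            simp only [Finset.mem_range.mp hi, if_true]
          rw [this, h3]
          simp only [lt_irrefl, if_false]
          omega

lemma exists_exp (d c : ℕ) (hd : 1 ≤ d) : ∃ k, Inc d k ∧ A d k = c := by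
  have : ∀ d, c < (c + (d + 1)).choose (d + 1) := by
    intro d
    induction d with
    | zero => simp
    | succ d ih =>
      rw [← add_assoc c (d + 1) 1, Nat.choose_succ_succ]
      exact lt_of_lt_of_le ih (Nat.le_add_right _ _)
  obtain ⟨e, rfl⟩ := Nat.exists_eq_add_of_le' hd
  obtain ⟨k, h1, _, h3⟩ := exists_exp_lt _ _ _ (this e)
  exact ⟨k, h1, h3⟩

open Module

/-- polynomial ring in `n` variables -/
abbrev Sn (n : ℕ) := MvPolynomial (Fin n) ℂ
/-- homogeneous part -/
abbrev Hm (n k : ℕ) : Submodule ℂ (Sn n) := homogeneousSubmodule (Fin n) ℂ k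

instance fdHm (n k : ℕ) : FiniteDimensional ℂ (Hm n k) :=
  Module.Finite.iff_fg.mpr (homogeneousSubmodule_fg (Fin n) ℂ k)

lemma fd_of_le {n k : ℕ} {W : Submodule ℂ (Sn n)} (h : W ≤ Hm n k) : FiniteDimensional ℂ W :=
  Submodule.finiteDimensional_of_le h

/-- general linear form -/
noncomputable def lin {n : ℕ} (b : Fin n → ℂ) : Sn n := ∑ i, b i • X i

lemma lin_mem {n : ℕ} (b : Fin n → ℂ) : lin b ∈ Hm n 1 :=
  Submodule.sum_mem _ fun i _ => Submodule.smul_mem _ _ (isHomogeneous_X ℂ i)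

/-- `h * U` -/
noncomputable def mulS {n : ℕ} (h : Sn n) (U : Submodule ℂ (Sn n)) : Submodule ℂ (Sn n) :=
  U.map (LinearMap.mulLeft ℂ h)

lemma mem_mulS {n : ℕ} {h : Sn n} {U : Submodule ℂ (Sn n)} {f : Sn n} :
    f ∈ mulS h U ↔ ∃ g ∈ U, h * g = f := by
  simp [mulS, Submodule.mem_map]

lemma mul_mem_Hm {n a k : ℕ} {h f : Sn n} (hh : h ∈ Hm n a) (hf : f ∈ Hm n k) :
    h * f ∈ Hm n (k + a) := by
  rw [add_comm k a]
  exact IsHomogeneous.mul hh hf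

lemma mulS_le {n k : ℕ} {h : Sn n} (hh : h ∈ Hm n 1) : mulS h (Hm n k) ≤ Hm n (k + 1) := by
  intro f hf
  obtain ⟨g, hg, rfl⟩ := mem_mulS.mp hf
  exact mul_mem_Hm hh hg

/-- codimension in degree `k` -/
noncomputable def cod {n : ℕ} (k : ℕ) (W : Submodule ℂ (Sn n)) : ℕ :=
  finrank ℂ (Hm n k) - finrank ℂ W

lemma cod_add {n k : ℕ} {W : Submodule ℂ (Sn n)} (h : W ≤ Hm n k) :
    cod k W + finrank ℂ W = finrank ℂ (Hm n k) := by
  have := Submodule.finrank_mono h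
  unfold cod; omega

lemma cod_anti {n k : ℕ} {U W : Submodule ℂ (Sn n)} (h : U ≤ W) (hW : W ≤ Hm n k) :
    cod k W ≤ cod k U := by
  have := fd_of_le hW
  have := Submodule.finrank_mono h
  unfold cod; omega

lemma eq_of_cod {n k : ℕ} {U W : Submodule ℂ (Sn n)} (h : U ≤ W) (hW : W ≤ Hm n k)
    (hc : cod k U ≤ cod k W) : U = W := by
  have := fd_of_le hW
  have h1 := cod_add hW
  have h2 := cod_add (h.trans hW)
  exact Submodule.eq_of_le_of_finrank_le h (by omega)

/-- colon -/
noncomputable def col {n : ℕ} (k : ℕ) (h : Sn n) (Q : Submodule ℂ (Sn n)) : Submodule ℂ (Sn n) :=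
  Q.comap (LinearMap.mulLeft ℂ h) ⊓ Hm n k

lemma mem_col {n k : ℕ} {h f : Sn n} {Q : Submodule ℂ (Sn n)} :
    f ∈ col k h Q ↔ h * f ∈ Q ∧ f ∈ Hm n k := by
  simp [col]

lemma col_le {n k : ℕ} {h : Sn n} {Q : Submodule ℂ (Sn n)} : col k h Q ≤ Hm n k := inf_le_right

lemma finrank_mulS {n : ℕ} {h : Sn n} (h0 : h ≠ 0) (U : Submodule ℂ (Sn n)) :
    finrank ℂ (mulS h U) = finrank ℂ U :=
  (Submodule.equivMapOfInjective _ (mul_right_injective₀ h0) U).finrank_eq.symm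

lemma exact_cod {n k : ℕ} {h : Sn n} (hh : h ∈ Hm n 1) (h0 : h ≠ 0) {Q : Submodule ℂ (Sn n)}
    (hQ : Q ≤ Hm n (k + 1)) :
    cod (k + 1) Q = cod k (col k h Q) + cod (k + 1) (Q ⊔ mulS h (Hm n k)) := by
  have := fd_of_le hQ
  have := fd_of_le (mulS_le (k := k) hh)
  have h1 := Submodule.finrank_sup_add_finrank_inf_eq Q (mulS h (Hm n k))
  have h2 : Q ⊓ mulS h (Hm n k) = mulS h (col k h Q) := by
    ext f
    simp only [Submodule.mem_inf, mem_mulS, mem_col]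
    constructor
    · rintro ⟨hf, g, hg, rfl⟩
      exact ⟨g, ⟨hf, hg⟩, rfl⟩
    · rintro ⟨g, ⟨h1, h2⟩, rfl⟩
      exact ⟨h1, g, h2, rfl⟩
  rw [h2, finrank_mulS h0, finrank_mulS h0] at h1
  have h3 := cod_add hQ
  have h4 := cod_add (col_le (k := k) (h := h) (Q := Q))
  have h5 := cod_add (sup_le hQ (mulS_le (k := k) hh))
  omega

/-- a property holding on a nonempty Zariski open set -/
def Gen (n : ℕ) (P : (Fin n → ℂ) → Prop) : Prop :=
  ∃ p : Sn n, p ≠ 0 ∧ ∀ b, eval b p ≠ 0 → P b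

lemma Gen.exists {n P} (h : Gen n P) : ∃ b, P b := by
  obtain ⟨p, hp, h⟩ := h
  by_contra hcon
  push Not at hcon
  apply hp
  apply MvPolynomial.funext
  intro b
  by_contra hb
  exact hcon b (h b (by simpa using hb))

lemma Gen.and {n P Q} (h : Gen n P) (h' : Gen n Q) : Gen n (fun b => P b ∧ Q b) := by
  obtain ⟨p, hp, h⟩ := h
  obtain ⟨q, hq, h'⟩ := h'
  refine ⟨p * q, mul_ne_zero hp hq, fun b hb => ?_⟩
  rw [map_mul] at hb
  exact ⟨h b (left_ne_zero_of_mul hb), h' b (right_ne_zero_of_mul hb)⟩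

lemma Gen.mono {n P Q} (h : Gen n P) (h' : ∀ b, P b → Q b) : Gen n Q := by
  obtain ⟨p, hp, h⟩ := h
  exact ⟨p, hp, fun b hb => h' b (h b hb)⟩

lemma Gen.all {n P} (h : ∀ b, P b) : Gen n P := ⟨1, one_ne_zero, fun b _ => h b⟩

lemma Gen.ne {n : ℕ} (i : Fin n) : Gen n (fun b => b i ≠ 0) :=
  ⟨X i, X_ne_zero i, fun b hb => by simpa using hb⟩

lemma semicont {n k : ℕ} {W : Submodule ℂ (Sn n)} (hW : W ≤ Hm n (k + 1)) (b0 : Fin n → ℂ) :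
    Gen n (fun b => cod (k + 1) (W ⊔ mulS (lin b) (Hm n k)) ≤
      cod (k + 1) (W ⊔ mulS (lin b0) (Hm n k))) := by
  have hle : ∀ b : Fin n → ℂ, W ⊔ mulS (lin b) (Hm n k) ≤ Hm n (k + 1) :=
    fun b => sup_le hW (mulS_le (lin_mem b))
  have : ∀ b : Fin n → ℂ, FiniteDimensional ℂ ↥(W ⊔ mulS (lin b) (Hm n k)) :=
    fun b => fd_of_le (hle b)
  set U := W ⊔ mulS (lin b0) (Hm n k) with hU
  let B := Module.finBasis ℂ U
  set r := finrank ℂ U with hr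
  have hdec : ∀ j : Fin r, ∃ w f : Sn n, w ∈ W ∧ f ∈ Hm n k ∧ (B j : Sn n) = w + lin b0 * f := by
    intro j
    obtain ⟨w, hw, g, hg, hs⟩ := Submodule.mem_sup.mp (B j).2
    obtain ⟨f, hf, rfl⟩ := mem_mulS.mp hg
    exact ⟨w, f, hw, hf, hs.symm⟩
  choose w f hw hf hB using hdec
  have hli : LinearIndependent ℂ (fun j => (B j : Sn n)) :=
    B.linearIndependent.map' U.subtype (Submodule.ker_subtype U)
  have hinj : LinearMap.ker (Fintype.linearCombination ℂ (fun j => (B j : Sn n))) = ⊥ :=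
    LinearMap.ker_eq_bot.mpr hli.fintypeLinearCombination_injective
  obtain ⟨g, hg⟩ := LinearMap.exists_leftInverse_of_injective _ hinj
  have hg' : ∀ j, g (B j : Sn n) = Pi.single j 1 := by
    intro j
    have := congrArg (fun L => L (Pi.single j 1)) hg
    simpa [Fintype.linearCombination_apply_single] using this
  let M : Matrix (Fin r) (Fin r) (Sn n) := fun i j =>
    C (g (w j) i) + ∑ m, C (g (X m * f j) i) * X m
  have hM : ∀ b i j, eval b (M i j) = g (w j + lin b * f j) i := by
    intro b i j
    simp only [M, map_add, map_sum, map_mul, eval_C, eval_X, lin, Finset.sum_mul, Pi.add_apply,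
      Finset.sum_apply, smul_mul_assoc, map_smul, Pi.smul_apply, smul_eq_mul]
    congr 1
    exact Finset.sum_congr rfl fun m _ => mul_comm _ _
  have hdet : ∀ b, eval b M.det = Matrix.det (Matrix.of fun i j => g (w j + lin b * f j) i) := by
    intro b
    rw [RingHom.map_det]
    congr 1
    ext i j
    exact hM b i j
  refine ⟨M.det, ?_, ?_⟩
  · intro h0
    have h1 := hdet b0
    rw [h0, map_zero] at h1
    have : (Matrix.of fun i j => g (w j + lin b0 * f j) i : Matrix (Fin r) (Fin r) ℂ) = 1 := by
      ext i j
      rw [Matrix.of_apply, ← hB, hg', Matrix.one_apply, Pi.single_apply]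
    rw [this, Matrix.det_one] at h1
    exact zero_ne_one h1
  · intro b hb
    rw [hdet] at hb
    have h1 : LinearIndependent ℂ (fun j => w j + lin b * f j) := by
      apply LinearIndependent.of_comp g
      have := Matrix.linearIndependent_cols_of_det_ne_zero hb
      exact this
    have h2 := finrank_span_eq_card h1
    have h3 : Submodule.span ℂ (Set.range (fun j => w j + lin b * f j)) ≤
        W ⊔ mulS (lin b) (Hm n k) := by
      rw [Submodule.span_le]
      rintro _ ⟨j, rfl⟩
      exact Submodule.add_mem_sup (hw j) (mem_mulS.mpr ⟨f j, hf j, rfl⟩)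
    have h4 := Submodule.finrank_mono h3
    rw [h2, Fintype.card_fin] at h4
    unfold cod
    omega

lemma Hm_succ (n k : ℕ) : Hm n (k + 1) = Hm n 1 * Hm n k := by
  rw [Hm, Hm, Hm, ← homogeneousSubmodule_one_pow ℂ (k + 1), ← homogeneousSubmodule_one_pow ℂ k,
    pow_succ']

lemma X_eq_lin {n : ℕ} (i : Fin n) : (X i : Sn n) = lin (Pi.single i 1) := by
  classical
  simp [lin, Pi.single_apply, ite_smul]

lemma mulS_mono {n : ℕ} {h : Sn n} {U V : Submodule ℂ (Sn n)} (hUV : U ≤ V) : mulS h U ≤ mulS h V :=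
  Submodule.map_mono hUV

lemma exists_min {n d : ℕ} {W : Submodule ℂ (Sn n)} (hW : W ≤ Hm n (d + 1))
    (hpos : 0 < cod (d + 1) W) :
    ∃ b0, (∀ b, cod (d + 1) (W ⊔ mulS (lin b0) (Hm n d)) ≤ cod (d + 1) (W ⊔ mulS (lin b) (Hm n d))) ∧
      cod (d + 1) (W ⊔ mulS (lin b0) (Hm n d)) < cod (d + 1) W ∧ lin b0 ≠ 0 := by
  let F : (Fin n → ℂ) → ℕ := fun b => cod (d + 1) (W ⊔ mulS (lin b) (Hm n d))
  have hle : ∀ b : Fin n → ℂ, W ⊔ mulS (lin b) (Hm n d) ≤ Hm n (d + 1) :=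
    fun b => sup_le hW (mulS_le (lin_mem b))
  have hmin : ∀ b, F (Function.argmin F) ≤ F b := fun b => Function.argmin_le F b
  have hlt : F (Function.argmin F) < cod (d + 1) W := by
    by_contra hcon
    rw [not_lt] at hcon
    have h1 : ∀ b : Fin n → ℂ, mulS (lin b) (Hm n d) ≤ W := by
      intro b
      have := eq_of_cod (le_sup_left : W ≤ W ⊔ mulS (lin b) (Hm n d)) (hle b)
        (hcon.trans (hmin b))
      rw [this]
      exact le_sup_right
    have h2 : Hm n (d + 1) ≤ W := by
      rw [Hm_succ, Hm, homogeneousSubmodule_one_eq_span_X, Submodule.mul_le]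
      intro m hm f hf
      induction hm using Submodule.span_induction with
      | mem x hx =>
        obtain ⟨i, rfl⟩ := hx
        rw [X_eq_lin]
        exact h1 _ (mem_mulS.mpr ⟨f, hf, rfl⟩)
      | zero => rw [zero_mul]; exact W.zero_mem
      | add x y _ _ hx hy => rw [add_mul]; exact W.add_mem hx hy
      | smul a x _ hx => rw [smul_mul_assoc]; exact W.smul_mem a hx
    have h3 : cod (d + 1) W = 0 := by
      rw [le_antisymm hW h2, cod, Nat.sub_self]
    omega
  refine ⟨Function.argmin F, hmin, hlt, ?_⟩
  intro h0
  have : F (Function.argmin F) = cod (d + 1) W := by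
    simp only [F, h0]
    congr 1
    apply sup_eq_left.mpr
    intro f hf
    obtain ⟨g, _, rfl⟩ := mem_mulS.mp hf
    rw [zero_mul]; exact W.zero_mem
  omega

theorem green (n : ℕ) : ∀ (d N : ℕ) (W : Submodule ℂ (Sn n)), W ≤ Hm n (d + 1) →
    cod (d + 1) W = N → ∀ k, Inc (d + 1) k → A (d + 1) k = N →
    Gen n (fun b => cod (d + 1) (W ⊔ mulS (lin b) (Hm n d)) ≤ Gs (d + 1) k) := by
  have hz : ∀ (d : ℕ) (W : Submodule ℂ (Sn n)), W ≤ Hm n (d + 1) → cod (d + 1) W = 0 → ∀ m,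
      Gen n (fun b => cod (d + 1) (W ⊔ mulS (lin b) (Hm n d)) ≤ m) := by
    intro d W hW h0 m
    apply Gen.all
    intro b
    have := cod_anti (le_sup_left : W ≤ W ⊔ mulS (lin b) (Hm n d)) (sup_le hW (mulS_le (lin_mem b)))
    omega
  intro d
  induction d with
  | zero =>
    intro N W hW hN k hk hkN
    rcases Nat.eq_zero_or_pos N with h0 | hpos
    · exact hz _ W hW (by omega) _
    obtain ⟨b0, -, hlt, -⟩ := exists_min hW (by omega)
    refine (semicont hW b0).mono fun b hb => ?_
    simp [A, Gs] at *
    omega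
  | succ e ihd =>
    intro N
    induction N using Nat.strong_induction_on with
    | _ N ihN =>
    intro W hW hN k hk hkN
    rcases Nat.eq_zero_or_pos N with h0 | hpos
    · exact hz _ W hW (by omega) _
    obtain ⟨b0, hmin, hlt, hne⟩ := exists_min hW (by omega)
    refine (semicont hW b0).mono fun b hb => hb.trans ?_
    clear hb b
    have hW' : W ⊔ mulS (lin b0) (Hm n (e + 1)) ≤ Hm n (e + 1 + 1) :=
      sup_le hW (mulS_le (lin_mem b0))
    have hex := exact_cod (lin_mem b0) hne hW
    obtain ⟨p, hp, hpA⟩ := exists_exp (e + 1) (cod (e + 1) (col (e + 1) (lin b0) W)) (by omega)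
    obtain ⟨l, hl, hlA⟩ := exists_exp (e + 1 + 1)
      (cod (e + 1 + 1) (W ⊔ mulS (lin b0) (Hm n (e + 1)))) (by omega)
    have g1 := ihd _ (col (e + 1) (lin b0) W) col_le rfl p hp hpA
    have g2 := ihN _ (by omega) _ hW' rfl l hl hlA
    obtain ⟨b, hb1, hb2⟩ := (g1.and g2).exists
    set Q := W ⊔ mulS (lin b) (Hm n (e + 1)) with hQ
    have hQle : Q ≤ Hm n (e + 1 + 1) := sup_le hW (mulS_le (lin_mem b))
    have hexQ := exact_cod (lin_mem b0) hne hQle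
    have h1 : cod (e + 1) (col (e + 1) (lin b0) Q) ≤
        cod (e + 1) (col (e + 1) (lin b0) W ⊔ mulS (lin b) (Hm n e)) := by
      apply cod_anti _ col_le
      apply sup_le
      · intro f hf
        rw [mem_col] at hf ⊢
        exact ⟨Submodule.mem_sup_left hf.1, hf.2⟩
      · intro f hf
        refine mem_col.mpr ⟨?_, mulS_le (lin_mem b) hf⟩
        obtain ⟨g, hg, rfl⟩ := mem_mulS.mp hf
        apply Submodule.mem_sup_right
        exact mem_mulS.mpr ⟨lin b0 * g, mul_mem_Hm (lin_mem b0) hg, by ring⟩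
    have h2 : Q ⊔ mulS (lin b0) (Hm n (e + 1)) =
        W ⊔ mulS (lin b0) (Hm n (e + 1)) ⊔ mulS (lin b) (Hm n (e + 1)) := by
      rw [hQ, sup_right_comm]
    rw [h2] at hexQ
    have h3 : _ ≤ cod (e + 1 + 1) Q := hmin b
    rw [← hlA]
    apply N5 (e + 1) k l p hk hl hp
    · omega
    · omega

lemma le_exact {n k : ℕ} (b : Fin n → ℂ) {W Q : Submodule ℂ (Sn n)}
    (hW : W ≤ Hm n k) (hQ : Q ≤ Hm n (k + 1)) (hWQ : Hm n 1 * W ≤ Q) :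
    cod (k + 1) Q ≤ cod k W + cod (k + 1) (Q ⊔ mulS (lin b) (Hm n k)) := by
  by_cases h0 : lin b = 0
  · have : mulS (lin b) (Hm n k) ≤ Q := by
      rw [h0]
      intro f hf
      obtain ⟨g, _, rfl⟩ := mem_mulS.mp hf
      rw [zero_mul]; exact Q.zero_mem
    rw [sup_eq_left.mpr this]
    exact Nat.le_add_left _ _
  · rw [exact_cod (lin_mem b) h0 hQ]
    apply Nat.add_le_add_right
    apply cod_anti _ col_le
    intro f hf
    exact mem_col.mpr ⟨hWQ (Submodule.mul_mem_mul (lin_mem b) hf), hW hf⟩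

lemma mul_le_Hm {n k : ℕ} {W : Submodule ℂ (Sn n)} (hW : W ≤ Hm n k) : Hm n 1 * W ≤ Hm n (k + 1) := by
  rw [Hm_succ n k]
  exact Submodule.mul_le.mpr fun a ha f hf => Submodule.mul_mem_mul ha (hW hf)

theorem macaulay {n e : ℕ} {W : Submodule ℂ (Sn n)} (hW : W ≤ Hm n (e + 1)) (k : ℕ → ℕ)
    (hk : Inc (e + 1) k) (hkA : A (e + 1) k = cod (e + 1) W) :
    cod (e + 1 + 1) (Hm n 1 * W) ≤ Ms (e + 1) k := by
  obtain ⟨l, hl, hlA⟩ := exists_exp (e + 1 + 1) (cod (e + 1 + 1) (Hm n 1 * W)) (by omega)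
  obtain ⟨b, hb⟩ := (green n (e + 1) _ _ (mul_le_Hm hW) rfl l hl hlA).exists
  have h1 := le_exact b hW (mul_le_Hm hW) le_rfl
  by_contra hcon
  have := N4 (e + 1) k l hk hl (by omega)
  omega


lemma comp_mul {n a : ℕ} {w : Sn n} (hw : w ∈ Hm n a) (t : ℕ) (s : Sn n) :
    homogeneousComponent (a + t) (w * s) = w * homogeneousComponent t s := by
  induction s using MvPolynomial.induction_on' with
  | monomial u c =>
    have h1 : (monomial u c : Sn n) ∈ Hm n u.degree := isHomogeneous_monomial c rfl
    have h2 : w * monomial u c ∈ Hm n (a + u.degree) := IsHomogeneous.mul hw h1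
    rw [homogeneousComponent_of_mem h1, homogeneousComponent_of_mem h2]
    by_cases h : t = u.degree
    · simp [h]
    · simp [h]
  | add p q hp hq => rw [mul_add, map_add, hp, hq, map_add, mul_add]

/-- restriction to the hyperplane `lin b = 0` -/
noncomputable def res {n : ℕ} (b : Fin (n + 1) → ℂ) : Sn (n + 1) →ₐ[ℂ] Sn n :=
  aeval (Fin.cons (-(∑ i, (b i.succ / b 0) • X i)) X : Fin (n + 1) → Sn n)

/-- the section of the restriction -/
noncomputable def iot {n : ℕ} : Sn n →ₐ[ℂ] Sn (n + 1) := rename Fin.succ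

lemma res_mem {n k : ℕ} (b : Fin (n + 1) → ℂ) {f : Sn (n + 1)} (hf : f ∈ Hm (n + 1) k) :
    res b f ∈ Hm n k := by
  have : ∀ i, ((Fin.cons (-(∑ i, (b i.succ / b 0) • X i)) X : Fin (n + 1) → Sn n) i) ∈ Hm n 1 := by
    intro i
    refine Fin.cases ?_ ?_ i
    · rw [Fin.cons_zero]
      exact Submodule.neg_mem _ (Submodule.sum_mem _ fun i _ =>
        Submodule.smul_mem _ _ (isHomogeneous_X ℂ i))
    · intro j
      rw [Fin.cons_succ]
      exact isHomogeneous_X ℂ j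
  have h := IsHomogeneous.aeval (S := ℂ) (m := k) (n := 1) (φ := f) hf _ this
  rw [one_mul] at h
  exact h

lemma iot_mem {n k : ℕ} {f : Sn n} (hf : f ∈ Hm n k) : iot f ∈ Hm (n + 1) k :=
  IsHomogeneous.rename_isHomogeneous hf

lemma res_iot {n : ℕ} (b : Fin (n + 1) → ℂ) (f : Sn n) : res b (iot f) = f := by
  unfold res iot
  rw [aeval_rename]
  have : ((Fin.cons (-(∑ i, (b i.succ / b 0) • X i)) X : Fin (n + 1) → Sn n) ∘ Fin.succ) = X := by
    ext1 i; simp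
  rw [this, aeval_X_left_apply]

lemma res_lin {n : ℕ} (b : Fin (n + 1) → ℂ) (hb : b 0 ≠ 0) : res b (lin b) = 0 := by
  unfold lin res
  rw [map_sum, Fin.sum_univ_succ]
  simp only [map_smul, aeval_X, Fin.cons_zero, Fin.cons_succ, smul_neg, Finset.smul_sum, smul_smul]
  rw [neg_add_eq_zero]
  refine Finset.sum_congr rfl fun i _ => ?_
  rw [mul_div_cancel₀ _ hb]

lemma lin_ne {n : ℕ} (b : Fin (n + 1) → ℂ) (hb : b 0 ≠ 0) : lin b ≠ 0 := by
  intro h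
  have h1 := congrArg (eval (Pi.single 0 1)) h
  simp [lin, Pi.single_apply] at h1
  exact hb h1

lemma dvd_sub {n : ℕ} (b : Fin (n + 1) → ℂ) (hb : b 0 ≠ 0) (f : Sn (n + 1)) :
    lin b ∣ f - iot (res b f) := by
  induction f using MvPolynomial.induction_on with
  | C a =>
    have : iot (res b (C a)) = C a := by
      rw [← algebraMap_eq, AlgHom.commutes, AlgHom.commutes, algebraMap_eq]
    rw [this, sub_self]; exact dvd_zero _
  | add p q hp hq =>
    have := dvd_add hp hq
    rw [map_add, map_add]
    convert this using 1
    ring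
  | mul_X p i hp =>
    have hX : lin b ∣ X i - iot (res b (X i)) := by
      refine Fin.cases ?_ ?_ i
      · refine ⟨C (b 0)⁻¹, ?_⟩
        simp only [res, iot, lin, aeval_X, Fin.cons_zero, map_neg, map_sum, map_smul, rename_X,
          sub_neg_eq_add]
        rw [mul_comm, ← smul_eq_C_mul, Fin.sum_univ_succ, smul_add, smul_smul,
          inv_mul_cancel₀ hb, one_smul, Finset.smul_sum]
        congr 1
        refine Finset.sum_congr rfl fun j _ => ?_
        rw [smul_smul, div_eq_inv_mul]
      · intro j
        simp [res, iot]
    rw [map_mul, map_mul]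
    have : p * X i - iot (res b p) * iot (res b (X i)) =
      (p - iot (res b p)) * X i + iot (res b p) * (X i - iot (res b (X i))) := by ring
    rw [this]
    exact dvd_add (hp.mul_right _) (hX.mul_left _)

lemma res_ker {n k : ℕ} (b : Fin (n + 1) → ℂ) (hb : b 0 ≠ 0) {f : Sn (n + 1)}
    (hf : f ∈ Hm (n + 1) (k + 1)) (h0 : res b f = 0) : ∃ g ∈ Hm (n + 1) k, f = lin b * g := by
  obtain ⟨g, hg⟩ := dvd_sub b hb f
  rw [h0, map_zero, sub_zero] at hg
  refine ⟨homogeneousComponent k g, homogeneousComponent_isHomogeneous k g, ?_⟩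
  rw [← comp_mul (lin_mem b), ← hg, add_comm 1 k]
  exact (homogeneousComponent_eq_self hf).symm

/-- image under restriction -/
noncomputable def rmap {n : ℕ} (b : Fin (n + 1) → ℂ) (W : Submodule ℂ (Sn (n + 1))) :
    Submodule ℂ (Sn n) := W.map (res b).toLinearMap

lemma mem_rmap {n : ℕ} {b : Fin (n + 1) → ℂ} {W : Submodule ℂ (Sn (n + 1))} {f : Sn n} :
    f ∈ rmap b W ↔ ∃ g ∈ W, res b g = f := by
  simp [rmap, Submodule.mem_map]

lemma rmap_Hm {n : ℕ} (b : Fin (n + 1) → ℂ) (k : ℕ) : rmap b (Hm (n + 1) k) = Hm n k := by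
  apply le_antisymm
  · intro f hf
    obtain ⟨g, hg, rfl⟩ := mem_rmap.mp hf
    exact res_mem b hg
  · intro f hf
    exact mem_rmap.mpr ⟨iot f, iot_mem hf, res_iot b f⟩

lemma rmap_le {n k : ℕ} (b : Fin (n + 1) → ℂ) {W : Submodule ℂ (Sn (n + 1))}
    (hW : W ≤ Hm (n + 1) k) : rmap b W ≤ Hm n k := by
  rw [← rmap_Hm b]; exact Submodule.map_mono hW

lemma rmap_mul {n : ℕ} (b : Fin (n + 1) → ℂ) (t : ℕ) (W : Submodule ℂ (Sn (n + 1))) :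
    rmap b (Hm (n + 1) 1 ^ t * W) = Hm n 1 ^ t * rmap b W := by
  have h := rmap_Hm b 1
  unfold rmap at h ⊢
  rw [Submodule.map_mul, Submodule.map_pow, h]

lemma finrank_map_add {n m : ℕ} (φ : Sn n →ₗ[ℂ] Sn m) (V : Submodule ℂ (Sn n))
    [FiniteDimensional ℂ V] (K : Submodule ℂ (Sn n)) (hK : K ≤ V)
    (hker : ∀ f ∈ V, φ f = 0 ↔ f ∈ K) :
    finrank ℂ (V.map φ) + finrank ℂ K = finrank ℂ V := by
  have h := LinearMap.finrank_range_add_finrank_ker (φ.domRestrict V)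
  have h1 : LinearMap.range (φ.domRestrict V) = V.map φ := by
    rw [LinearMap.domRestrict, LinearMap.range_comp, Submodule.range_subtype]
  have h2 : finrank ℂ (LinearMap.ker (φ.domRestrict V)) = finrank ℂ K := by
    have h3 : LinearMap.ker (φ.domRestrict V) = K.comap V.subtype := by
      ext ⟨f, hf⟩
      simp [LinearMap.mem_ker, hker f hf]
    rw [h3]
    exact (Submodule.comapSubtypeEquivOfLe hK).finrank_eq
  rw [h1, h2] at h
  exact h

lemma cod_res {n k : ℕ} (b : Fin (n + 1) → ℂ) (hb : b 0 ≠ 0) {U : Submodule ℂ (Sn (n + 1))}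
    (hU : U ≤ Hm (n + 1) (k + 1)) :
    cod (k + 1) (rmap b U) = cod (k + 1) (U ⊔ mulS (lin b) (Hm (n + 1) k)) := by
  have hle : U ⊔ mulS (lin b) (Hm (n + 1) k) ≤ Hm (n + 1) (k + 1) :=
    sup_le hU (mulS_le (lin_mem b))
  have hker : ∀ f ∈ Hm (n + 1) (k + 1), (res b).toLinearMap f = 0 ↔
      f ∈ mulS (lin b) (Hm (n + 1) k) := by
    intro f hf
    constructor
    · intro h
      obtain ⟨g, hg, rfl⟩ := res_ker b hb hf h
      exact mem_mulS.mpr ⟨g, hg, rfl⟩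
    · intro h
      obtain ⟨g, hg, rfl⟩ := mem_mulS.mp h
      simp [res_lin b hb]
  have := fd_of_le hle
  have h1 := finrank_map_add (res b).toLinearMap _ _ (mulS_le (k := k) (lin_mem b)) hker
  have h2 := finrank_map_add (res b).toLinearMap _ _
    (le_sup_right : mulS (lin b) (Hm (n + 1) k) ≤ U ⊔ mulS (lin b) (Hm (n + 1) k))
    (fun f hf => hker f (hle hf))
  have h3 : (U ⊔ mulS (lin b) (Hm (n + 1) k)).map (res b).toLinearMap = rmap b U := by
    rw [Submodule.map_sup]
    apply sup_eq_left.mpr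
    intro f hf
    obtain ⟨g, hg, rfl⟩ := Submodule.mem_map.mp hf
    rw [(hker g (mulS_le (lin_mem b) hg)).mpr hg]
    exact Submodule.zero_mem _
  have h4 := rmap_Hm b (k + 1)
  unfold rmap at h4
  rw [h3] at h2
  rw [h4] at h1
  have h5 := cod_add (rmap_le b hU)
  have h6 := cod_add hle
  omega

/-- first syzygies are linear, from degree of `W` on -/
def Lp (n : ℕ) (W : Submodule ℂ (Sn n)) : Prop :=
  ∃ y : Fin n → Sn n, (∀ i, y i ∈ Hm n 1) ∧ Hm n 1 ≤ Submodule.span ℂ (Set.range y) ∧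
    ∀ (t : ℕ) (g : Fin n → Sn n), (∀ i, g i ∈ Hm n 1 ^ (t + 1) * W) → ∑ i, y i * g i = 0 →
      ∃ H : Fin n → Fin n → Sn n, (∀ i j, H i j ∈ Hm n 1 ^ t * W) ∧ (∀ i j, H i j = - H j i) ∧
        ∀ i, g i = ∑ j, y j * H i j

lemma pw_succ {n : ℕ} (t : ℕ) (W : Submodule ℂ (Sn n)) :
    Hm n 1 ^ (t + 1) * W = Hm n 1 * (Hm n 1 ^ t * W) := by
  rw [pow_succ', mul_assoc]

lemma pw_le {n k : ℕ} (t : ℕ) {W : Submodule ℂ (Sn n)} (hW : W ≤ Hm n k) :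
    Hm n 1 ^ t * W ≤ Hm n (k + t) := by
  induction t with
  | zero => simpa using hW
  | succ t ih => rw [pw_succ]; exact mul_le_Hm ih

lemma mem_span_mul {n m : ℕ} {y : Fin m → Sn n} {T U : Submodule ℂ (Sn n)}
    (hy : T ≤ Submodule.span ℂ (Set.range y)) {v : Sn n} (hv : v ∈ T * U) :
    ∃ g : Fin m → Sn n, (∀ i, g i ∈ U) ∧ v = ∑ i, y i * g i := by
  induction hv using Submodule.mul_induction_on' with
  | mem_mul_mem a ha u hu =>
    obtain ⟨c, hc⟩ := (Submodule.mem_span_range_iff_exists_fun ℂ).mp (hy ha)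
    refine ⟨fun i => c i • u, fun i => U.smul_mem _ hu, ?_⟩
    rw [← hc, Finset.sum_mul]
    refine Finset.sum_congr rfl fun i _ => ?_
    rw [smul_mul_assoc, mul_smul_comm]
  | add x _ z _ hx hz =>
    obtain ⟨g, hg, rfl⟩ := hx
    obtain ⟨g', hg', rfl⟩ := hz
    exact ⟨fun i => g i + g' i, fun i => U.add_mem (hg i) (hg' i), by
      simp only [mul_add, Finset.sum_add_distrib]⟩

lemma antisymm_sum {n m : ℕ} (y : Fin m → Sn n) (H : Fin m → Fin m → Sn n)
    (hH : ∀ i j, H i j = - H j i) : ∑ i, y i * ∑ j, y j * H i j = 0 := by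
  have h1 : ∑ i, y i * ∑ j, y j * H i j = - ∑ i, y i * ∑ j, y j * H i j := by
    conv_lhs => simp only [Finset.mul_sum]
    rw [Finset.sum_comm]
    simp only [Finset.mul_sum, ← Finset.sum_neg_distrib]
    refine Finset.sum_congr rfl fun i _ => Finset.sum_congr rfl fun j _ => ?_
    rw [hH j i]
    ring
  exact self_eq_neg.mp h1

/-- lifting a linear syzygy relation from the hyperplane -/
lemma lift_syz {n k t : ℕ} (b : Fin (n + 1) → ℂ) (hb : b 0 ≠ 0) {W : Submodule ℂ (Sn (n + 1))}
    (hW : W ≤ Hm (n + 1) k) {y : Fin n → Sn n} (hy : ∀ i, y i ∈ Hm n 1)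
    (hL : ∀ (g : Fin n → Sn n), (∀ i, g i ∈ Hm n 1 ^ (t + 1) * rmap b W) → ∑ i, y i * g i = 0 →
      ∃ H : Fin n → Fin n → Sn n, (∀ i j, H i j ∈ Hm n 1 ^ t * rmap b W) ∧
        (∀ i j, H i j = - H j i) ∧ ∀ i, g i = ∑ j, y j * H i j)
    (hinj : ∀ f ∈ Hm (n + 1) (k + t), lin b * f ∈ Hm (n + 1) 1 ^ (t + 1) * W →
      f ∈ Hm (n + 1) 1 ^ t * W)
    (g : Fin n → Sn (n + 1)) (hg : ∀ i, g i ∈ Hm (n + 1) 1 ^ (t + 1) * W)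
    (h0 : res b (∑ i, iot (y i) * g i) = 0) :
    ∃ (H : Fin n → Fin n → Sn (n + 1)) (g' : Fin n → Sn (n + 1)),
      (∀ i j, H i j ∈ Hm (n + 1) 1 ^ t * W) ∧ (∀ i j, H i j = - H j i) ∧
      (∀ i, g' i ∈ Hm (n + 1) 1 ^ t * W) ∧
      ∀ i, g i = ∑ j, iot (y j) * H i j + lin b * g' i := by
  obtain ⟨H', hH'm, hH'a, hH'⟩ := hL (fun i => res b (g i))
    (fun i => by rw [← rmap_mul]; exact mem_rmap.mpr ⟨g i, hg i, rfl⟩)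
    (by simpa [res_iot] using h0)
  have hlift : ∀ i j, ∃ f ∈ Hm (n + 1) 1 ^ t * W, res b f = H' i j := by
    intro i j
    have := hH'm i j
    rw [← rmap_mul] at this
    exact mem_rmap.mp this
  choose F hFm hF using hlift
  let H : Fin n → Fin n → Sn (n + 1) := fun i j => (1 / 2 : ℂ) • (F i j - F j i)
  have hHm : ∀ i j, H i j ∈ Hm (n + 1) 1 ^ t * W :=
    fun i j => Submodule.smul_mem _ _ (Submodule.sub_mem _ (hFm i j) (hFm j i))
  have hHa : ∀ i j, H i j = - H j i := by
    intro i j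
    simp only [H]
    rw [← smul_neg, neg_sub]
  have hHr : ∀ i j, res b (H i j) = H' i j := by
    intro i j
    simp only [H, map_smul, map_sub, hF]
    rw [hH'a j i, sub_neg_eq_add, ← two_smul ℂ (H' i j), smul_smul]
    norm_num
  have hHy : ∀ i, ∑ j, iot (y j) * H i j ∈ Hm (n + 1) 1 ^ (t + 1) * W := by
    intro i
    rw [pw_succ]
    exact Submodule.sum_mem _ fun j _ => Submodule.mul_mem_mul (iot_mem (hy j)) (hHm i j)
  have hg' : ∀ i, ∃ f ∈ Hm (n + 1) 1 ^ t * W, g i - ∑ j, iot (y j) * H i j = lin b * f := by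
    intro i
    have hm := Submodule.sub_mem _ (hg i) (hHy i)
    obtain ⟨f, hf, hff⟩ := res_ker (k := k + t) b hb (pw_le (t + 1) hW hm)
      (by simp [res_iot, hHr, hH' i])
    exact ⟨f, hinj f hf (by rw [← hff]; exact hm), hff⟩
  choose g' hg'm hg' using hg'
  exact ⟨H, g', hHm, hHa, hg'm, fun i => by rw [← hg' i]; ring⟩


/-- shifted cascade -/
def shift (k : ℕ → ℕ) : ℕ → ℕ := fun i => if i = 0 then 0 else k (i - 1) + 1

lemma shift_inc {d k} (hk : Inc d k) : Inc (d + 1) (shift k) := by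
  intro i j hij hj
  simp only [shift]
  rw [if_neg (by omega : j ≠ 0)]
  by_cases hi : i = 0
  · rw [if_pos hi]; omega
  · rw [if_neg hi]
    have := hk (i - 1) (j - 1) (by omega) (by omega)
    omega

lemma A_shift (d k) : A (d + 1) (shift k) = Ms d k := by
  unfold A Ms
  rw [Finset.sum_range_succ']
  simp [shift]

lemma Gs_shift (d k) : Gs (d + 1) (shift k) = ∑ i ∈ Finset.range d, (k i).choose (i + 2) := by
  unfold Gs
  rw [Finset.sum_range_succ']
  simp [shift]

lemma Ms_eq (d k) : Ms d k = A d k + ∑ i ∈ Finset.range d, (k i).choose (i + 2) := by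
  unfold Ms A
  rw [← Finset.sum_add_distrib]
  rfl

lemma Ms_low {d k} (hk : Inc d k) :
    Ms d (low k) = ∑ i ∈ Finset.range d, (k i).choose (i + 2) := by
  apply Finset.sum_congr rfl
  intro i hi
  rcases low_cases k i (hk.le i (Finset.mem_range.mp hi)) with h | ⟨h1, h2⟩
  · rw [← h]
  · rw [h1, h2, choose_zero_of_lt (by omega), choose_zero_of_lt (by omega)]

/-- expected Hilbert function -/
def Ht (d t : ℕ) (k : ℕ → ℕ) : ℕ := ∑ i ∈ Finset.range d, (k i + t).choose (i + 1 + t)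

lemma Ht_step {d k} (hk : Inc d k) (t : ℕ) :
    Ht d (t + 1) k = Ht d t k + Ht d (t + 1) (low k) := by
  unfold Ht
  rw [← Finset.sum_add_distrib]
  apply Finset.sum_congr rfl
  intro i hi
  rcases low_cases k i (hk.le i (Finset.mem_range.mp hi)) with h | ⟨h1, h2⟩
  · rw [← h, show low k i + 1 + (t + 1) = (low k i + 1 + t) + 1 by ring,
      show i + 1 + (t + 1) = (i + 1 + t) + 1 by ring, Nat.choose_succ_succ,
      show low k i + (t + 1) = low k i + 1 + t by ring]
  · rw [h1, h2, choose_zero_of_lt (by omega), choose_zero_of_lt (by omega)]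

theorem persist : ∀ (n e : ℕ) (W : Submodule ℂ (Sn n)), W ≤ Hm n (e + 1) → ∀ k : ℕ → ℕ,
    Inc (e + 1) k → A (e + 1) k = cod (e + 1) W →
    cod (e + 1 + 1) (Hm n 1 * W) = Ms (e + 1) k →
    (∀ t, cod (e + 1 + t) (Hm n 1 ^ t * W) = Ht (e + 1) t k) ∧ Lp n W := by
  intro n
  induction n with
  | zero =>
    intro e W hW k hk hkA _
    have hbot : ∀ m, Hm 0 (m + 1) = ⊥ := by
      intro m
      rw [eq_bot_iff]
      intro f hf
      by_contra hne
      have h1 := isHomogeneous_of_isEmpty (Fin 0) ℂ f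
      have := IsHomogeneous.inj_right h1 hf hne
      omega
    have hcod : ∀ m (U : Submodule ℂ (Sn 0)), cod (m + 1) U = 0 := by
      intro m U
      unfold cod
      rw [hbot, finrank_bot, Nat.zero_sub]
    refine ⟨fun t => ?_, ?_⟩
    · rw [show e + 1 + t = e + t + 1 by ring, hcod]
      rw [hcod] at hkA
      symm
      apply Finset.sum_eq_zero
      intro i hi
      have h1 := (Finset.sum_eq_zero_iff.mp hkA) i hi
      rw [Nat.choose_eq_zero_iff] at h1
      exact choose_zero_of_lt (by omega)
    · refine ⟨fun i => i.elim0, fun i => i.elim0, ?_, ?_⟩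
      · rw [hbot 0]; exact bot_le
      · intro t g _ _
        exact ⟨fun i => i.elim0, fun i => i.elim0, fun i => i.elim0, fun i => i.elim0⟩
  | succ n ih =>
    intro e W hW k hk hkA hgr
    have hW1 := mul_le_Hm hW
    obtain ⟨b, ⟨hb0, hbW⟩, hbW1⟩ := (((Gen.ne (0 : Fin (n + 1))).and
      (green (n + 1) e _ W hW rfl k hk hkA)).and
      (green (n + 1) (e + 1) _ _ hW1 rfl (shift k) (shift_inc hk) (by rw [A_shift, hgr]))).exists
    have hne := lin_ne b hb0
    rw [Gs_shift] at hbW1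
    have hMs := Ms_eq (e + 1) k
    have hle := le_exact b hW hW1 le_rfl
    have ha1 : cod (e + 1 + 1) (Hm (n + 1) 1 * W ⊔ mulS (lin b) (Hm (n + 1) (e + 1))) =
        ∑ i ∈ Finset.range (e + 1), (k i).choose (i + 2) := by omega
    have hex := exact_cod (lin_mem b) hne hW1
    have hWcol : W ≤ col (e + 1) (lin b) (Hm (n + 1) 1 * W) := fun f hf =>
      mem_col.mpr ⟨Submodule.mul_mem_mul (lin_mem b) hf, hW hf⟩
    have hcol : W = col (e + 1) (lin b) (Hm (n + 1) 1 * W) := eq_of_cod hWcol col_le (by omega)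
    have hW' := rmap_le b hW
    have hr1 : rmap b (Hm (n + 1) 1 * W) = Hm n 1 * rmap b W := by
      have := rmap_mul b 1 W
      rwa [pow_one, pow_one] at this
    have hc0 := cod_res b hb0 hW
    have hc1 := cod_res b hb0 hW1
    rw [hr1, ha1, ← Ms_low hk] at hc1
    rw [← hc0, ← A_low hk] at hbW
    have hc0' : A (e + 1) (low k) = cod (e + 1) (rmap b W) := by
      obtain ⟨m, hm, hmA⟩ := exists_exp (e + 1) (cod (e + 1) (rmap b W)) (by omega)
      have h1 := macaulay hW' m hm hmA
      by_contra hcon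
      have := Ms_smono (e + 1) m (low k) hm (low_inc hk) (by omega)
      omega
    obtain ⟨hH, y', hy'm, hy's, hL⟩ := ih e (rmap b W) hW' (low k) (low_inc hk) hc0' hc1
    let y : Fin (n + 1) → Sn (n + 1) := Fin.cons (lin b) (fun i => iot (y' i))
    have hym : ∀ i, y i ∈ Hm (n + 1) 1 := by
      intro i
      refine Fin.cases ?_ (fun j => ?_) i
      · exact lin_mem b
      · exact iot_mem (hy'm j)
    have hys : Hm (n + 1) 1 ≤ Submodule.span ℂ (Set.range y) := by
      intro f hf
      have h1 : res b f ∈ Submodule.span ℂ (Set.range y') := hy's (res_mem b hf)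
      obtain ⟨c, hc⟩ := (Submodule.mem_span_range_iff_exists_fun ℂ).mp h1
      obtain ⟨g, hg, hfg⟩ := res_ker (k := 0) b hb0
        (Submodule.sub_mem _ hf (iot_mem (res_mem b hf))) (by rw [map_sub, res_iot, sub_self])
      rw [Hm, homogeneousSubmodule_zero] at hg
      obtain ⟨a, rfl⟩ := Submodule.mem_one.mp hg
      have h2 : f = a • y 0 + ∑ i, c i • y (Fin.succ i) := by
        have h3 : iot (res b f) = ∑ i, c i • y (Fin.succ i) := by
          rw [← hc, map_sum]
          simp only [map_smul]
          rfl
        calc f = lin b * algebraMap ℂ (Sn (n + 1)) a + iot (res b f) := sub_eq_iff_eq_add.mp hfg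
          _ = a • y 0 + iot (res b f) := by rw [Algebra.smul_def, mul_comm]; rfl
          _ = a • y 0 + ∑ i, c i • y (Fin.succ i) := by rw [h3]
      rw [h2]
      refine Submodule.add_mem _ (Submodule.smul_mem _ _ (Submodule.subset_span ⟨0, rfl⟩))
        (Submodule.sum_mem _ fun i _ =>
          Submodule.smul_mem _ _ (Submodule.subset_span ⟨Fin.succ i, rfl⟩))
    -- injectivity of multiplication by the linear form
    have hinj : ∀ t, ∀ f ∈ Hm (n + 1) (e + 1 + t), lin b * f ∈ Hm (n + 1) 1 ^ (t + 1) * W →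
        f ∈ Hm (n + 1) 1 ^ t * W := by
      intro t
      induction t with
      | zero =>
        intro f hf h
        rw [zero_add, pow_one] at h
        rw [pow_zero, one_mul, hcol]
        exact mem_col.mpr ⟨h, hf⟩
      | succ t iht =>
        intro f hf h
        rw [pw_succ] at h
        obtain ⟨g, hg, hfg⟩ := mem_span_mul hys h
        rw [Fin.sum_univ_succ] at hfg
        change lin b * f = lin b * g 0 + ∑ i, iot (y' i) * g i.succ at hfg
        have h0 : res b (∑ i, iot (y' i) * g i.succ) = 0 := by
          have := congrArg (res b) hfg
          rw [map_add, map_mul, map_mul, res_lin b hb0, zero_mul, zero_mul, zero_add] at this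
          exact this.symm
        obtain ⟨H, g', hHm, hHa, hg'm, hgg⟩ := lift_syz b hb0 hW hy'm (hL t) iht
          (fun i => g i.succ) (fun i => hg i.succ) h0
        have h2 : lin b * f = lin b * (g 0 + ∑ i, iot (y' i) * g' i) := by
          rw [hfg, mul_add]
          congr 1
          have h3 := antisymm_sum (fun i => iot (y' i)) H hHa
          calc ∑ i, iot (y' i) * g i.succ
              = ∑ i, iot (y' i) * ∑ j, iot (y' j) * H i j + ∑ i, iot (y' i) * (lin b * g' i) := by
                rw [← Finset.sum_add_distrib]
                refine Finset.sum_congr rfl fun i _ => ?_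
                rw [hgg i, mul_add]
            _ = lin b * ∑ i, iot (y' i) * g' i := by
                rw [h3, zero_add, Finset.mul_sum]
                refine Finset.sum_congr rfl fun i _ => ?_
                ring
        rw [mul_left_cancel₀ hne h2]
        refine Submodule.add_mem _ (hg 0) (Submodule.sum_mem _ fun i _ => ?_)
        rw [pw_succ]
        exact Submodule.mul_mem_mul (iot_mem (hy'm i)) (hg'm i)
    refine ⟨?_, y, hym, hys, ?_⟩
    · intro t
      induction t with
      | zero =>
        rw [pow_zero, one_mul, add_zero, ← hkA]
        rfl
      | succ t iht =>
        have hle1 := pw_le (t + 1) hW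
        have h1 := exact_cod (k := e + 1 + t) (lin_mem b) hne hle1
        have h2 : col (e + 1 + t) (lin b) (Hm (n + 1) 1 ^ (t + 1) * W) = Hm (n + 1) 1 ^ t * W := by
          apply le_antisymm
          · intro f hf
            rw [mem_col] at hf
            exact hinj t f hf.2 hf.1
          · intro f hf
            refine mem_col.mpr ⟨?_, pw_le t hW hf⟩
            rw [pw_succ]
            exact Submodule.mul_mem_mul (lin_mem b) hf
        have h3 := cod_res (k := e + 1 + t) b hb0 hle1
        have h4 := hH (t + 1)
        rw [← rmap_mul] at h4
        rw [h2, ← h3, iht] at h1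
        rw [Ht_step hk, ← h4]
        exact h1
    · intro t g hg hsum
      rw [Fin.sum_univ_succ] at hsum
      change lin b * g 0 + ∑ i, iot (y' i) * g i.succ = 0 at hsum
      have h0 : res b (∑ i, iot (y' i) * g i.succ) = 0 := by
        have := congrArg (res b) hsum
        rw [map_add, map_mul, res_lin b hb0, zero_mul, zero_add, map_zero] at this
        exact this
      obtain ⟨H, g', hHm, hHa, hg'm, hgg⟩ := lift_syz b hb0 hW hy'm (hL t) (hinj t)
        (fun i => g i.succ) (fun i => hg i.succ) h0
      have h2 : lin b * (g 0 + ∑ i, iot (y' i) * g' i) = 0 := by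
        rw [← hsum, mul_add]
        congr 1
        have h3 := antisymm_sum (fun i => iot (y' i)) H hHa
        symm
        calc ∑ i, iot (y' i) * g i.succ
            = ∑ i, iot (y' i) * ∑ j, iot (y' j) * H i j + ∑ i, iot (y' i) * (lin b * g' i) := by
              rw [← Finset.sum_add_distrib]
              refine Finset.sum_congr rfl fun i _ => ?_
              rw [hgg i, mul_add]
          _ = lin b * ∑ i, iot (y' i) * g' i := by
              rw [h3, zero_add, Finset.mul_sum]
              refine Finset.sum_congr rfl fun i _ => ?_
              ring
      have h3 := (mul_eq_zero.mp h2).resolve_left hne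
      refine ⟨Fin.cons (Fin.cons 0 (fun j => - g' j)) (fun i => Fin.cons (g' i) (H i)), ?_, ?_, ?_⟩
      · intro i j
        refine Fin.cases ?_ (fun i => ?_) i <;> refine Fin.cases ?_ (fun j => ?_) j
        · simp only [Fin.cons_zero]; exact Submodule.zero_mem _
        · simp only [Fin.cons_zero, Fin.cons_succ]; exact Submodule.neg_mem _ (hg'm j)
        · simp only [Fin.cons_zero, Fin.cons_succ]; exact hg'm i
        · simp only [Fin.cons_succ]; exact hHm i j
      · intro i j
        refine Fin.cases ?_ (fun i => ?_) i <;> refine Fin.cases ?_ (fun j => ?_) j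
        · simp
        · simp
        · simp
        · simp only [Fin.cons_succ]; exact hHa i j
      · intro i
        refine Fin.cases ?_ (fun i => ?_) i
        · rw [Fin.sum_univ_succ]
          simp only [Fin.cons_zero, Fin.cons_succ, mul_zero, zero_add, mul_neg,
            Finset.sum_neg_distrib]
          exact eq_neg_of_add_eq_zero_left h3
        · rw [Fin.sum_univ_succ]
          simp only [Fin.cons_zero, Fin.cons_succ]
          exact (hgg i).trans (add_comm _ _)

lemma span_inf {n d : ℕ} {V : Submodule ℂ (Sn n)} (hV : V ≤ Hm n d) (t : ℕ) :
    Submodule.restrictScalars ℂ (Ideal.span (V : Set (Sn n))) ⊓ Hm n (d + t) =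
      Hm n 1 ^ t * V := by
  apply le_antisymm
  · rintro f ⟨hf, hft⟩
    have key : ∀ f ∈ Ideal.span (V : Set (Sn n)),
        homogeneousComponent (d + t) f ∈ Hm n 1 ^ t * V := by
      intro f hf
      obtain ⟨c, hc, rfl⟩ := Submodule.mem_span_set.mp hf
      rw [Finsupp.sum, map_sum]
      refine Submodule.sum_mem _ fun v hv => ?_
      rw [smul_eq_mul, mul_comm (c v) v, comp_mul (hV (hc hv)), mul_comm v]
      refine Submodule.mul_mem_mul ?_ (hc hv)
      rw [Hm, homogeneousSubmodule_one_pow]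
      exact homogeneousComponent_isHomogeneous _ _
    have := key f hf
    rwa [homogeneousComponent_eq_self hft] at this
  · refine le_inf ?_ (pw_le t hV)
    rw [Submodule.mul_le]
    intro a _ v hv
    exact Ideal.mul_mem_left _ a (Ideal.subset_span hv)

/-- cascade attached to an expansion -/
def casc (ε : ℕ → ℤ) : ℕ → ℕ := fun i => (((i + 1 : ℕ) : ℤ) + ε (i + 1)).toNat

lemma sum_Icc (d : ℕ) (f : ℕ → ℕ) :
    ∑ i ∈ Finset.Icc 1 d, f i = ∑ i ∈ Finset.range d, f (i + 1) := by
  rw [Finset.range_eq_Ico, Finset.sum_Ico_add' f 0 d 1]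
  rfl

lemma casc_spec {c d : ℕ} {ε : ℕ → ℤ} (h : IsMacaulayExpansion c d ε) :
    Inc d (casc ε) ∧ A d (casc ε) = c ∧
      ∑ i ∈ Finset.Icc 1 d, (((i : ℤ) + ε i + 1).toNat).choose (i + 1) = Ms d (casc ε) := by
  obtain ⟨h1, h2, h3⟩ := h
  refine ⟨?_, ?_, ?_⟩
  · intro i j hij hj
    have a := h1 (i + 1) (by omega) (by omega)
    have b := h2 (i + 1) (j + 1) (by omega) (by omega) (by omega)
    simp only [casc]
    omega
  · rw [h3, sum_Icc]; rfl
  · rw [sum_Icc]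
    apply Finset.sum_congr rfl
    intro i hi
    have a := h1 (i + 1) (by omega) (by have := Finset.mem_range.mp hi; omega)
    have : (((i + 1 : ℕ) : ℤ) + ε (i + 1) + 1).toNat = casc ε i + 1 := by
      simp only [casc]; omega
    rw [this]

/-- expansion of the persistent value in base `d + t` -/
def ext (t : ℕ) (k : ℕ → ℕ) : ℕ → ℕ := fun j => if j < t then j else k (j - t) + t

lemma ext_inc {d k} (hk : Inc d k) (t : ℕ) : Inc (t + d) (ext t k) := by
  intro i j hij hj
  simp only [ext]
  by_cases hj' : j < t
  · rw [if_pos hj', if_pos (by omega)]; exact hij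
  · rw [if_neg hj']
    by_cases hi : i < t
    · rw [if_pos hi]; omega
    · rw [if_neg hi]
      have := hk (i - t) (j - t) (by omega) (by omega)
      omega

lemma A_ext (d t k) : A (t + d) (ext t k) = Ht d t k := by
  unfold A Ht
  rw [Finset.sum_range_add]
  rw [Finset.sum_eq_zero, zero_add]
  · refine Finset.sum_congr rfl fun i _ => ?_
    simp only [ext]
    rw [if_neg (by omega), Nat.add_sub_cancel_left]
    congr 1; ring
  · intro i hi
    simp only [ext]
    rw [if_pos (Finset.mem_range.mp hi)]
    exact choose_zero_of_lt (by omega)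

lemma Ms_ext (d t k) : Ms (t + d) (ext t k) = Ht d (t + 1) k := by
  unfold Ms Ht
  rw [Finset.sum_range_add]
  rw [Finset.sum_eq_zero, zero_add]
  · refine Finset.sum_congr rfl fun i _ => ?_
    simp only [ext]
    rw [if_neg (by omega), Nat.add_sub_cancel_left]
    congr 1; ring
  · intro i hi
    simp only [ext]
    rw [if_pos (Finset.mem_range.mp hi)]
    exact choose_zero_of_lt (by omega)

end GP

/-- **Gotzmann persistence.** Let `V ⊆ S_d` be a linear subspace, `J` the ideal
generated by `V`, `c = h_J(d)` with Macaulay expansion `(ε_d,…,ε_1)` in base `d`.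
If `h_J(d+1) = c^⟨d⟩ = ∑ C(i+ε_i+1, i+1)`, then for every `k ≥ d` one has
`h_J(k+1) = (h_J(k))^⟨k⟩`, computed from the Macaulay expansion of `h_J(k)` in base `k`. -/
theorem gotzmann_persistence (n d : ℕ) (hd : 1 ≤ d)
    (V : Submodule ℂ (MvPolynomial (Fin (n + 1)) ℂ))
    (hV : V ≤ homogeneousSubmodule (Fin (n + 1)) ℂ d)
    (J : Ideal (MvPolynomial (Fin (n + 1)) ℂ))
    (hJ : J = Ideal.span (V : Set (MvPolynomial (Fin (n + 1)) ℂ)))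
    (c : ℕ) (hc : c = hilbertFn J d)
    (ε : ℕ → ℤ) (hε : IsMacaulayExpansion c d ε)
    (hgrowth : hilbertFn J (d + 1) =
      ∑ i ∈ Finset.Icc 1 d, (((i : ℤ) + ε i + 1).toNat).choose (i + 1)) :
    ∀ k : ℕ, d ≤ k → ∀ δ : ℕ → ℤ, IsMacaulayExpansion (hilbertFn J k) k δ →
      hilbertFn J (k + 1) =
        ∑ i ∈ Finset.Icc 1 k, (((i : ℤ) + δ i + 1).toNat).choose (i + 1) := by
  obtain ⟨hinc, hA, hMs⟩ := GP.casc_spec hε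
  rw [hMs] at hgrowth
  obtain ⟨e, rfl⟩ := Nat.exists_eq_add_of_le' hd
  have hH : ∀ t, hilbertFn J (e + 1 + t) =
      GP.cod (e + 1 + t) (GP.Hm (n + 1) 1 ^ t * V) := by
    intro t
    rw [← GP.span_inf hV t, ← hJ]
    rfl
  have hH0 : hilbertFn J (e + 1) = GP.cod (e + 1) V := by
    have := hH 0
    rwa [pow_zero, one_mul, add_zero] at this
  have hH1 : hilbertFn J (e + 1 + 1) = GP.cod (e + 1 + 1) (GP.Hm (n + 1) 1 * V) := by
    have := hH 1
    rwa [pow_one] at this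
  obtain ⟨hP, -⟩ := GP.persist (n + 1) e V hV (GP.casc ε) hinc
    (by rw [hA, hc, hH0]) (by rw [← hH1, hgrowth])
  intro k hk δ hδ
  obtain ⟨t, rfl⟩ := Nat.exists_eq_add_of_le hk
  obtain ⟨hinc', hA', hMs'⟩ := GP.casc_spec hδ
  rw [hMs', add_assoc, hH (t + 1), hP (t + 1), ← GP.Ms_ext, add_comm t (e + 1)]
  have hu := GP.uniq (e + 1 + t) (GP.ext t (GP.casc ε)) (GP.casc δ)
    (by rw [add_comm]; exact GP.ext_inc hinc t) hinc'
    (by rw [hA', hH t, hP t, add_comm, GP.A_ext])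
  unfold GP.Ms
  refine Finset.sum_congr rfl fun i hi => ?_
  rw [hu i (Finset.mem_range.mp hi)]
end

section
/- Let S = ℂ[x_0, …, x_n], let I ⊆ S be a homogeneous ideal and let d ≥ 1 be an integer such that h_I(d) ≤ d and such that the degree-(d+1) part I_{d+1} = I ∩ S_{d+1} is base point free, i.e., for every nonzero point a ∈ ℂ^{n+1} there exists f ∈ I_{d+1} with f(a) ≠ 0. Then for every integer k ≥ d, either h_I(k+1) < h_I(k) or h_I(k) = 0. -/
open MvPolynomial

/-- A linear perturbation does not decrease the rank. -/
lemma exists_perturb {V Y : Type*} [AddCommGroup V] [Module ℂ V] [AddCommGroup Y] [Module ℂ Y]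
    [FiniteDimensional ℂ V] (A B : V →ₗ[ℂ] Y) :
    ∃ t : ℂ, t ≠ 0 ∧ Module.finrank ℂ (LinearMap.range A) ≤
      Module.finrank ℂ (LinearMap.range (A + t • B)) := by
  obtain ⟨C, hC⟩ := A.rangeRestrict.exists_rightInverse_of_surjective A.range_rangeRestrict
  obtain ⟨P, hP⟩ := (LinearMap.range A).subtype.exists_leftInverse_of_injective
    (Submodule.ker_subtype _)
  set N : Module.End ℂ (LinearMap.range A) := P ∘ₗ B ∘ₗ C with hN
  have hfin : (spectrum ℂ N).Finite := Module.End.finite_spectrum N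
  obtain ⟨s, hs⟩ := (hfin.union (Set.finite_singleton (0 : ℂ))).exists_notMem
  simp only [Set.mem_union, Set.mem_singleton_iff, not_or] at hs
  obtain ⟨hs1, hs0⟩ := hs
  have hu : IsUnit (algebraMap ℂ (Module.End ℂ (LinearMap.range A)) s - N) :=
    spectrum.notMem_iff.mp hs1
  have hinj := ((Module.End.isUnit_iff _).mp hu).1
  refine ⟨-s⁻¹, by simpa using hs0, ?_⟩
  have hPA : ∀ x, P (A (C x)) = x := by
    intro x
    have h2 : A (C x) = (x : Y) := congrArg Subtype.val (LinearMap.congr_fun hC x)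
    rw [h2]
    simpa using LinearMap.congr_fun hP x
  have key : ∀ x, s • P ((A + (-s⁻¹) • B) (C x)) =
      (algebraMap ℂ (Module.End ℂ (LinearMap.range A)) s - N) x := by
    intro x
    simp [hN, hPA, smul_smul, hs0, Module.algebraMap_end_apply, sub_eq_add_neg]
  have hinj2 : Function.Injective ((A + (-s⁻¹) • B).rangeRestrict ∘ₗ C) := by
    intro x y hxy
    apply hinj
    rw [← key, ← key]
    have : (A + (-s⁻¹) • B) (C x) = (A + (-s⁻¹) • B) (C y) := congrArg Subtype.val hxy
    rw [this]
  exact LinearMap.finrank_le_finrank_of_injective hinj2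

instance fin_hom (n d : ℕ) : FiniteDimensional ℂ (homogeneousSubmodule (Fin (n + 1)) ℂ d) :=
  Module.Finite.iff_fg.mpr (homogeneousSubmodule_fg _ _ d)

lemma hom_succ (n d : ℕ) : homogeneousSubmodule (Fin (n + 1)) ℂ (d + 1) =
    homogeneousSubmodule (Fin (n + 1)) ℂ 1 * homogeneousSubmodule (Fin (n + 1)) ℂ d := by
  rw [← homogeneousSubmodule_one_pow (σ := Fin (n + 1)) (R := ℂ) (d + 1),
    ← homogeneousSubmodule_one_pow (σ := Fin (n + 1)) (R := ℂ) d, pow_succ']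

lemma hom_mul {n a b : ℕ} {f g : MvPolynomial (Fin (n + 1)) ℂ}
    (hf : f ∈ homogeneousSubmodule (Fin (n + 1)) ℂ a)
    (hg : g ∈ homogeneousSubmodule (Fin (n + 1)) ℂ b) :
    f * g ∈ homogeneousSubmodule (Fin (n + 1)) ℂ (a + b) :=
  IsHomogeneous.mul hf hg

lemma hom_mul_one {n b : ℕ} {f g : MvPolynomial (Fin (n + 1)) ℂ}
    (hf : f ∈ homogeneousSubmodule (Fin (n + 1)) ℂ 1)
    (hg : g ∈ homogeneousSubmodule (Fin (n + 1)) ℂ b) :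
    f * g ∈ homogeneousSubmodule (Fin (n + 1)) ℂ (b + 1) :=
  (add_comm 1 b) ▸ hom_mul hf hg

/-- degree `d - 1` part, with `⊥` in degree `-1`. -/
noncomputable def prevHom (n : ℕ) : ℕ → Submodule ℂ (MvPolynomial (Fin (n + 1)) ℂ)
  | 0 => ⊥
  | d + 1 => homogeneousSubmodule (Fin (n + 1)) ℂ d

instance fin_prevHom (n d : ℕ) : FiniteDimensional ℂ (prevHom n d) := by
  cases d with
  | zero => exact inferInstanceAs (FiniteDimensional ℂ (⊥ : Submodule ℂ (MvPolynomial (Fin (n + 1)) ℂ)))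
  | succ d => exact fin_hom n d

lemma mul_prevHom {n d : ℕ} {l g : MvPolynomial (Fin (n + 1)) ℂ}
    (hl : l ∈ homogeneousSubmodule (Fin (n + 1)) ℂ 1) (hg : g ∈ prevHom n d) :
    l * g ∈ homogeneousSubmodule (Fin (n + 1)) ℂ d := by
  cases d with
  | zero => simp only [prevHom, Submodule.mem_bot] at hg; subst hg; rw [mul_zero]; exact zero_mem _
  | succ d => exact hom_mul_one hl hg

/-- Special case of Green's hyperplane restriction theorem. -/
lemma green {n : ℕ} {Y : Type*} [AddCommGroup Y] [Module ℂ Y] (d : ℕ) :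
    ∀ q : MvPolynomial (Fin (n + 1)) ℂ →ₗ[ℂ] Y,
    Module.finrank ℂ ((homogeneousSubmodule (Fin (n + 1)) ℂ d).map q) ≤ d →
    ∃ l ∈ homogeneousSubmodule (Fin (n + 1)) ℂ 1,
      (homogeneousSubmodule (Fin (n + 1)) ℂ d).map q ≤
        (prevHom n d).map (q ∘ₗ LinearMap.mulLeft ℂ l) := by
  induction d with
  | zero =>
    intro q hq
    refine ⟨0, zero_mem _, ?_⟩
    rw [Nat.le_zero, Submodule.finrank_eq_zero] at hq
    rw [hq]; exact bot_le
  | succ d ih =>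
    intro q hq
    by_contra hcon
    push Not at hcon
    simp only [prevHom] at hcon
    have hsub : ∀ m ∈ homogeneousSubmodule (Fin (n + 1)) ℂ 1,
        (homogeneousSubmodule (Fin (n + 1)) ℂ d).map (q ∘ₗ LinearMap.mulLeft ℂ m) ≤
          (homogeneousSubmodule (Fin (n + 1)) ℂ (d + 1)).map q := by
      rintro m hm _ ⟨g, hg, rfl⟩
      refine ⟨m * g, ?_, rfl⟩
      exact hom_mul_one hm hg
    have hlt : ∀ m ∈ homogeneousSubmodule (Fin (n + 1)) ℂ 1,
        Module.finrank ℂ ((homogeneousSubmodule (Fin (n + 1)) ℂ d).map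
          (q ∘ₗ LinearMap.mulLeft ℂ m)) ≤ d := by
      intro m hm
      have : Module.finrank ℂ ((homogeneousSubmodule (Fin (n + 1)) ℂ d).map
          (q ∘ₗ LinearMap.mulLeft ℂ m)) <
          Module.finrank ℂ ((homogeneousSubmodule (Fin (n + 1)) ℂ (d + 1)).map q) :=
        Submodule.finrank_lt_finrank_of_lt (lt_of_le_not_ge (hsub m hm) (hcon m hm))
      omega
    -- choose `m` of maximal rank
    obtain ⟨m, hm, hmax⟩ : ∃ m ∈ homogeneousSubmodule (Fin (n + 1)) ℂ 1,
        ∀ m' ∈ homogeneousSubmodule (Fin (n + 1)) ℂ 1,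
        Module.finrank ℂ ((homogeneousSubmodule (Fin (n + 1)) ℂ d).map
          (q ∘ₗ LinearMap.mulLeft ℂ m')) ≤
        Module.finrank ℂ ((homogeneousSubmodule (Fin (n + 1)) ℂ d).map
          (q ∘ₗ LinearMap.mulLeft ℂ m)) := by
      set R : Set ℕ := (fun m => Module.finrank ℂ ((homogeneousSubmodule (Fin (n + 1)) ℂ d).map
          (q ∘ₗ LinearMap.mulLeft ℂ m))) '' (homogeneousSubmodule (Fin (n + 1)) ℂ 1 : Set _) with hR
      have hb : BddAbove R := ⟨d, by rintro _ ⟨m, hm, rfl⟩; exact hlt m hm⟩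
      have hne : R.Nonempty := ⟨_, 0, zero_mem _, rfl⟩
      obtain ⟨m, hm, hme⟩ := Nat.sSup_mem hne hb
      refine ⟨m, hm, fun m' hm' => ?_⟩
      have h1 := le_csSup hb (show _ ∈ R from ⟨m', hm', rfl⟩)
      rw [← hme] at h1
      exact h1
    obtain ⟨l, hl, hle⟩ := ih _ (hlt m hm)
    apply hcon l hl
    have hAm : ∀ m' ∈ homogeneousSubmodule (Fin (n + 1)) ℂ 1,
        (prevHom n d).map ((q ∘ₗ LinearMap.mulLeft ℂ m') ∘ₗ LinearMap.mulLeft ℂ l) ≤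
        (homogeneousSubmodule (Fin (n + 1)) ℂ d).map (q ∘ₗ LinearMap.mulLeft ℂ m') := by
      rintro m' hm' _ ⟨g, hg, rfl⟩
      exact ⟨l * g, mul_prevHom hl hg, rfl⟩
    have hAl : ∀ m' ∈ homogeneousSubmodule (Fin (n + 1)) ℂ 1,
        (prevHom n d).map ((q ∘ₗ LinearMap.mulLeft ℂ m') ∘ₗ LinearMap.mulLeft ℂ l) ≤
        (homogeneousSubmodule (Fin (n + 1)) ℂ d).map (q ∘ₗ LinearMap.mulLeft ℂ l) := by
      rintro m' hm' _ ⟨g, hg, rfl⟩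
      refine ⟨m' * g, mul_prevHom hm' hg, ?_⟩
      simp only [LinearMap.comp_apply, LinearMap.mulLeft_apply]
      congr 1; ring
    have hml := hle.trans (hAl m hm)
    have hall : ∀ p ∈ homogeneousSubmodule (Fin (n + 1)) ℂ 1,
        (homogeneousSubmodule (Fin (n + 1)) ℂ d).map (q ∘ₗ LinearMap.mulLeft ℂ p) ≤
        (homogeneousSubmodule (Fin (n + 1)) ℂ d).map (q ∘ₗ LinearMap.mulLeft ℂ l) := by
      intro p hp
      obtain ⟨t, ht, hrk⟩ := exists_perturb
        (((q ∘ₗ LinearMap.mulLeft ℂ m) ∘ₗ LinearMap.mulLeft ℂ l) ∘ₗ (prevHom n d).subtype)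
        (((q ∘ₗ LinearMap.mulLeft ℂ p) ∘ₗ LinearMap.mulLeft ℂ l) ∘ₗ (prevHom n d).subtype)
      have hmt : m + t • p ∈ homogeneousSubmodule (Fin (n + 1)) ℂ 1 :=
        add_mem hm (Submodule.smul_mem _ t hp)
      have heq : (((q ∘ₗ LinearMap.mulLeft ℂ m) ∘ₗ LinearMap.mulLeft ℂ l) ∘ₗ
          (prevHom n d).subtype) +
          t • (((q ∘ₗ LinearMap.mulLeft ℂ p) ∘ₗ LinearMap.mulLeft ℂ l) ∘ₗ
          (prevHom n d).subtype) =
          (((q ∘ₗ LinearMap.mulLeft ℂ (m + t • p)) ∘ₗ LinearMap.mulLeft ℂ l) ∘ₗ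
          (prevHom n d).subtype) := by
        ext x
        simp [add_mul]
      rw [heq, LinearMap.range_comp, LinearMap.range_comp, Submodule.range_subtype] at hrk
      have h1 := Submodule.finrank_mono hle
      have h2 := hmax _ hmt
      have h3 := Submodule.eq_of_le_of_finrank_le (hAm _ hmt) (h2.trans (h1.trans hrk))
      have h4 := h3 ▸ hAl _ hmt
      rintro _ ⟨g, hg, rfl⟩
      have h5 := h4 ⟨g, hg, rfl⟩
      have h6 := hml ⟨g, hg, rfl⟩
      have h7 := Submodule.smul_mem _ t⁻¹ (sub_mem h5 h6)
      convert h7 using 1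
      simp [add_mul, smul_smul, ht]
    rw [hom_succ]
    rw [Submodule.map_le_iff_le_comap, Submodule.mul_le]
    intro p hp g hg
    exact hall p hp ⟨g, hg, rfl⟩

/-- Evaluation of polynomials at commuting elements. -/
lemma exists_aeval {n : ℕ} {A : Type*} [Ring A] [Algebra ℂ A] (M : Fin (n + 1) → A)
    (hM : ∀ i j, M i * M j = M j * M i) :
    ∃ Ψ : MvPolynomial (Fin (n + 1)) ℂ →ₐ[ℂ] A, ∀ i, Ψ (X i) = M i := by
  have hc : ∀ a ∈ Set.range M, ∀ b ∈ Set.range M, a * b = b * a := by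
    rintro _ ⟨i, rfl⟩ _ ⟨j, rfl⟩; exact hM i j
  letI : CommRing (Algebra.adjoin ℂ (Set.range M)) := Algebra.adjoinCommRingOfComm ℂ hc
  refine ⟨(Algebra.adjoin ℂ (Set.range M)).val.comp
    (aeval (R := ℂ) (S₁ := Algebra.adjoin ℂ (Set.range M)) (fun i => ⟨M i, Algebra.subset_adjoin ⟨i, rfl⟩⟩)), fun i => ?_⟩
  simp

lemma core {n j : ℕ} {Y : Type*} [CommRing Y] [Algebra ℂ Y]
    (q : MvPolynomial (Fin (n + 1)) ℂ →ₐ[ℂ] Y) (l : MvPolynomial (Fin (n + 1)) ℂ)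
    (hl : l ∈ homogeneousSubmodule (Fin (n + 1)) ℂ 1)
    (hs : ∀ u ∈ homogeneousSubmodule (Fin (n + 1)) ℂ (j + 1),
      ∃ w ∈ homogeneousSubmodule (Fin (n + 1)) ℂ j, q u = q (l * w))
    (hs' : ∀ u ∈ homogeneousSubmodule (Fin (n + 1)) ℂ (j + 1 + 1),
      ∃ w ∈ homogeneousSubmodule (Fin (n + 1)) ℂ (j + 1), q u = q (l * w))
    (hinj : ∀ u ∈ homogeneousSubmodule (Fin (n + 1)) ℂ (j + 1), q (l * u) = 0 → q u = 0)
    (hne : ∃ u ∈ homogeneousSubmodule (Fin (n + 1)) ℂ (j + 1), q u ≠ 0) :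
    ∃ a : Fin (n + 1) → ℂ, a ≠ 0 ∧
      ∀ f ∈ homogeneousSubmodule (Fin (n + 1)) ℂ (j + 1 + 1), q f = 0 → eval a f = 0 := by
  set V : Submodule ℂ Y := (homogeneousSubmodule (Fin (n + 1)) ℂ (j + 1)).map q.toLinearMap with hV
  have hX : ∀ i, (X i : MvPolynomial (Fin (n + 1)) ℂ) ∈ homogeneousSubmodule (Fin (n + 1)) ℂ 1 :=
    fun i => isHomogeneous_X _ _
  let g : V →ₗ[ℂ] Y := LinearMap.mulLeft ℂ (q l) ∘ₗ V.subtype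
  have hg : ∀ v, g v = q l * v := fun v => rfl
  have hginj : Function.Injective g := by
    rw [injective_iff_map_eq_zero]
    rintro ⟨_, u, hu, rfl⟩ h
    rw [hg] at h
    apply Subtype.ext
    refine hinj u hu ?_
    rw [map_mul]; exact h
  obtain ⟨P, hP⟩ := g.exists_leftInverse_of_injective (LinearMap.ker_eq_bot.mpr hginj)
  have hPg : ∀ v, P (g v) = v := fun v => LinearMap.congr_fun hP v
  let M : Fin (n + 1) → Module.End ℂ V :=
    fun i => P ∘ₗ LinearMap.mulLeft ℂ (q (X i)) ∘ₗ V.subtype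
  have hM : ∀ i v, q l * (M i v : Y) = q (X i) * v := by
    rintro i ⟨_, u, hu, rfl⟩
    have hm : X i * u ∈ homogeneousSubmodule (Fin (n + 1)) ℂ (j + 1 + 1) := by
      exact hom_mul_one (hX i) hu
    obtain ⟨w, hw, hwe⟩ := hs' _ hm
    have h1 : q (X i) * q u = g ⟨q w, w, hw, rfl⟩ := by
      rw [hg, ← map_mul, hwe, map_mul]
    change q l * ((P (q (X i) * q u) : V) : Y) = q (X i) * q u
    rw [h1, hPg, hg]
  have hMl : ∀ i (v : V) (w : Y), (v : Y) = q l * w → ∀ v' : V, (v' : Y) = q (X i) * w →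
      M i v = v' := by
    intro i v w hv v' hv'
    apply hginj
    rw [hg, hg, hM, hv, hv']; ring
  have hcomm : ∀ i k, M i * M k = M k * M i := by
    intro i k
    ext v
    obtain ⟨v, u, hu, rfl⟩ := v
    obtain ⟨w, hw, hwe⟩ := hs u hu
    have hmem : ∀ i, q (X i) * q w ∈ V := by
      intro i
      refine ⟨X i * w, ?_, map_mul q _ _⟩
      exact hom_mul_one (hX i) hw
    have h1 : ∀ i, M i ⟨q u, u, hu, rfl⟩ = ⟨q (X i) * q w, hmem i⟩ := fun i =>
      hMl i _ (q w) (by rw [← map_mul, ← hwe]) _ rfl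
    have : M i (M k ⟨q u, u, hu, rfl⟩) = M k (M i ⟨q u, u, hu, rfl⟩) := by
      apply hginj
      rw [hg, hg, hM, hM, h1, h1]
      simp only; ring
    exact congrArg Subtype.val this
  obtain ⟨Ψ, hΨ⟩ := exists_aeval M hcomm
  have hA : ∀ m ∈ homogeneousSubmodule (Fin (n + 1)) ℂ 1, ∀ v : V,
      q l * (Ψ m v : Y) = q m * v := by
    intro m hm v
    rw [homogeneousSubmodule_one_eq_span_X] at hm
    induction hm using Submodule.span_induction with
    | mem x hx => obtain ⟨i, rfl⟩ := hx; rw [hΨ, hM]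
    | zero => simp
    | add x y _ _ hx hy => simp [mul_add, add_mul, hx, hy]
    | smul c x _ hx => simp [hx]
  have hB : ∀ a : ℕ, ∀ f ∈ homogeneousSubmodule (Fin (n + 1)) ℂ a, ∀ b, a + b = j + 1 →
      ∀ w ∈ homogeneousSubmodule (Fin (n + 1)) ℂ b, ∀ v : V, (v : Y) = q (l ^ a * w) →
      (Ψ f v : Y) = q (f * w) := by
    intro a
    induction a with
    | zero =>
      intro f hf b hb w hw v hv
      rw [← homogeneousSubmodule_one_pow, pow_zero, Submodule.mem_one] at hf
      obtain ⟨c, rfl⟩ := hf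
      rw [AlgHom.commutes, map_mul, AlgHom.commutes, Module.algebraMap_end_apply]
      simp [hv, Algebra.smul_def]
    | succ a ih =>
      intro f hf b hb w hw v hv
      rw [hom_succ] at hf
      induction hf using Submodule.mul_induction_on' with
      | mem_mul_mem m hm f hf =>
        have hlw : l * w ∈ homogeneousSubmodule (Fin (n + 1)) ℂ (b + 1) := by
          exact hom_mul_one hl hw
        have h1 := ih f hf (b + 1) (by omega) (l * w) hlw v (by rw [hv]; congr 1; ring)
        have hmem : m * f * w ∈ homogeneousSubmodule (Fin (n + 1)) ℂ (j + 1) := by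
          have := hom_mul (hom_mul hm hf) hw
          rwa [show 1 + a + b = j + 1 by omega] at this
        have h2 : Ψ (m * f) v = ⟨q (m * f * w), _, hmem, rfl⟩ := by
          apply hginj
          rw [hg, hg, map_mul, Module.End.mul_apply, hA m hm, h1]
          simp only [map_mul]; ring
        rw [h2]
      | add x _ y _ hx hy => simp [hx, hy, add_mul]
  have hle : l ^ (j + 1) ∈ homogeneousSubmodule (Fin (n + 1)) ℂ (j + 1) := by
    have := IsHomogeneous.pow hl (j + 1)
    rwa [one_mul] at this
  let e : V := ⟨q (l ^ (j + 1)), _, hle, rfl⟩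
  have hC : ∀ f ∈ homogeneousSubmodule (Fin (n + 1)) ℂ (j + 1), (Ψ f e : Y) = q f := by
    intro f hf
    have := hB (j + 1) f hf 0 rfl 1 (isHomogeneous_one _ _) e (by simp [e])
    simpa using this
  have hD : ∀ f ∈ homogeneousSubmodule (Fin (n + 1)) ℂ (j + 1 + 1),
      q l * (Ψ f e : Y) = q f := by
    intro f hf
    rw [hom_succ] at hf
    induction hf using Submodule.mul_induction_on' with
    | mem_mul_mem m hm f hf =>
      rw [map_mul, Module.End.mul_apply, hA m hm, hC f hf, map_mul]
    | add x _ y _ hx hy => simp [hx, hy, mul_add]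
  have hE : ∀ f ∈ homogeneousSubmodule (Fin (n + 1)) ℂ (j + 1 + 1), q f = 0 → Ψ f = 0 := by
    intro f hf h0
    have h1 : Ψ f e = 0 := by
      apply hginj
      rw [hg, hD f hf, h0, map_zero]
    apply LinearMap.ext
    rintro ⟨_, u, hu, rfl⟩
    have h2 : (⟨q u, u, hu, rfl⟩ : V) = Ψ u e := Subtype.ext (hC u hu).symm
    change Ψ f (⟨q u, u, hu, rfl⟩ : V) = 0
    rw [h2, ← Module.End.mul_apply, ← map_mul, mul_comm, map_mul, Module.End.mul_apply, h1,
      map_zero]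
  have hF : Ψ l = 1 := by
    apply LinearMap.ext
    intro v
    apply hginj
    rw [hg, hg, hA l hl]; rfl
  let J : Ideal (MvPolynomial (Fin (n + 1)) ℂ) := RingHom.ker Ψ
  have hJ : J ≠ ⊤ := by
    rw [Ideal.ne_top_iff_one]
    intro h
    have h1 : Ψ 1 = 0 := h
    rw [map_one] at h1
    obtain ⟨u, hu, hu0⟩ := hne
    have h2 := LinearMap.congr_fun h1 ⟨q u, u, hu, rfl⟩
    exact hu0 (congrArg Subtype.val h2)
  obtain ⟨a, ha⟩ : (zeroLocus ℂ J).Nonempty := by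
    by_contra h
    rw [Set.not_nonempty_iff_eq_empty] at h
    have h1 := vanishingIdeal_zeroLocus_eq_radical (K := ℂ) J
    rw [h] at h1
    have h2 : (1 : MvPolynomial (Fin (n + 1)) ℂ) ∈ J.radical := by
      rw [← h1]
      simp
    exact hJ (Ideal.radical_eq_top.mp ((Ideal.eq_top_iff_one _).mpr h2))
  rw [mem_zeroLocus_iff] at ha
  refine ⟨a, ?_, fun f hf h0 => ?_⟩
  · rintro rfl
    have h1 : l - 1 ∈ J := by
      change Ψ (l - 1) = 0
      rw [map_sub, hF, map_one, sub_self]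
    have h2 := ha _ h1
    have h3 : aeval (0 : Fin (n + 1) → ℂ) l = 0 := by
      rw [homogeneousSubmodule_one_eq_span_X] at hl
      clear_value J
      clear * - hl
      induction hl using Submodule.span_induction with
      | mem x hx => obtain ⟨i, rfl⟩ := hx; simp
      | zero => simp
      | add x y _ _ hx hy => rw [map_add, hx, hy, add_zero]
      | smul c x _ hx => rw [map_smul, hx, smul_zero]
    rw [map_sub, h3, map_one] at h2
    norm_num at h2
  · have := ha f (hE f hf h0)
    rwa [aeval_eq_eval] at this

lemma hilbertFn_eq {n : ℕ} (I : Ideal (MvPolynomial (Fin (n + 1)) ℂ)) (k : ℕ) :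
    hilbertFn I k = Module.finrank ℂ ((homogeneousSubmodule (Fin (n + 1)) ℂ k).map
      (Ideal.Quotient.mkₐ ℂ I).toLinearMap) := by
  set H := homogeneousSubmodule (Fin (n + 1)) ℂ k with hH
  set q := (Ideal.Quotient.mkₐ ℂ I).toLinearMap with hq
  have h1 := LinearMap.finrank_range_add_finrank_ker (q ∘ₗ H.subtype)
  rw [LinearMap.range_comp, Submodule.range_subtype, LinearMap.ker_comp] at h1
  have hker : LinearMap.ker q = Submodule.restrictScalars ℂ I := by
    ext x
    simp [hq, Ideal.Quotient.eq_zero_iff_mem]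
  have h2 : Module.finrank ℂ (Submodule.comap H.subtype (LinearMap.ker q)) =
      Module.finrank ℂ (Submodule.restrictScalars ℂ I ⊓ H : Submodule ℂ _) := by
    rw [hker, inf_comm, ← Submodule.map_comap_subtype]
    exact (Submodule.finrank_map_subtype_eq _ _).symm
  rw [h2] at h1
  unfold hilbertFn
  rw [← hH]
  omega

/-- If `I` is a homogeneous ideal with `h_I(d) ≤ d` whose degree-`(d+1)` part is
base point free, then for every `k ≥ d` either `h_I(k+1) < h_I(k)` or `h_I(k) = 0`. -/
theorem hilbert_fn_strictly_decreasing_of_base_point_free (n d : ℕ) (hd : 1 ≤ d)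
    (I : Ideal (MvPolynomial (Fin (n + 1)) ℂ)) (hI : IsHomogeneousIdeal I)
    (hsmall : hilbertFn I d ≤ d)
    (hbpf : ∀ a : Fin (n + 1) → ℂ, a ≠ 0 →
      ∃ f ∈ I, f ∈ homogeneousSubmodule (Fin (n + 1)) ℂ (d + 1) ∧ eval a f ≠ 0) :
    ∀ k : ℕ, d ≤ k → hilbertFn I (k + 1) < hilbertFn I k ∨ hilbertFn I k = 0 := by
  set q := Ideal.Quotient.mkₐ ℂ I with hq
  rw [hilbertFn_eq] at hsmall
  obtain ⟨l, hl, hgr⟩ := green d _ hsmall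
  have hs : ∀ k, d ≤ k + 1 → ∀ u ∈ homogeneousSubmodule (Fin (n + 1)) ℂ (k + 1),
      ∃ w ∈ homogeneousSubmodule (Fin (n + 1)) ℂ k, q u = q (l * w) := by
    intro k
    induction k with
    | zero =>
      intro hk u hu
      obtain rfl : d = 1 := by omega
      obtain ⟨w, hw, hwe⟩ := hgr ⟨u, hu, rfl⟩
      exact ⟨w, hw, hwe.symm⟩
    | succ k ih =>
      intro hk u hu
      rcases Nat.lt_or_ge (k + 1) d with h | h
      · obtain rfl : d = k + 1 + 1 := by omega
        obtain ⟨w, hw, hwe⟩ := hgr ⟨u, hu, rfl⟩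
        exact ⟨w, hw, hwe.symm⟩
      · rw [hom_succ] at hu
        induction hu using Submodule.mul_induction_on' with
        | mem_mul_mem m hm f hf =>
          obtain ⟨w, hw, hwe⟩ := ih h f hf
          refine ⟨m * w, ?_, ?_⟩
          · exact hom_mul_one hm hw
          · rw [map_mul, hwe]; simp only [map_mul]; ring
        | add x _ y _ hx hy =>
          obtain ⟨w, hw, hwe⟩ := hx
          obtain ⟨w', hw', hwe'⟩ := hy
          exact ⟨w + w', add_mem hw hw', by rw [mul_add, map_add, map_add, hwe, hwe']⟩
  intro k hk
  obtain ⟨j, rfl⟩ : ∃ j, k = j + 1 := ⟨k - 1, by omega⟩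
  by_contra hcon
  push Not at hcon
  obtain ⟨hge, hne⟩ := hcon
  rw [hilbertFn_eq, hilbertFn_eq] at hge
  rw [hilbertFn_eq] at hne
  set V := (homogeneousSubmodule (Fin (n + 1)) ℂ (j + 1)).map q.toLinearMap with hV
  set V' := (homogeneousSubmodule (Fin (n + 1)) ℂ (j + 1 + 1)).map q.toLinearMap with hV'
  let g : V →ₗ[ℂ] _ := LinearMap.mulLeft ℂ (q l) ∘ₗ V.subtype
  have hrange : V' ≤ LinearMap.range g := by
    rintro _ ⟨u, hu, rfl⟩
    obtain ⟨w, hw, hwe⟩ := hs (j + 1) (by omega) u hu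
    refine ⟨⟨q w, w, hw, rfl⟩, ?_⟩
    change q l * q w = q u
    rw [hwe, map_mul]
  have hker : LinearMap.ker g = ⊥ := by
    have h1 := Submodule.finrank_mono hrange
    have h2 := LinearMap.finrank_range_add_finrank_ker g
    rw [← Submodule.finrank_eq_zero (R := ℂ)]
    omega
  obtain ⟨a, ha, hav⟩ := core (j := j) q l hl (hs j (by omega)) (hs (j + 1) (by omega))
    (by
      intro u hu h0
      have h1 : (⟨q u, u, hu, rfl⟩ : V) ∈ LinearMap.ker g := by
        change q l * q u = 0
        rw [← map_mul, h0]
      rw [hker, Submodule.mem_bot] at h1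
      exact congrArg Subtype.val h1)
    (by
      by_contra h
      push Not at h
      apply hne
      rw [Submodule.finrank_eq_zero, eq_bot_iff]
      rintro _ ⟨u, hu, rfl⟩
      exact h u hu)
  obtain ⟨f, hfI, hf, hfa⟩ := hbpf a ha
  obtain ⟨i, hi⟩ : ∃ i, a i ≠ 0 := Function.ne_iff.mp ha
  have h1 := hav (X i ^ (j + 1 - d) * f) (by
      have := hom_mul (IsHomogeneous.pow (isHomogeneous_X ℂ i) (j + 1 - d)) hf
      rwa [show 1 * (j + 1 - d) + (d + 1) = j + 1 + 1 by omega] at this)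
    (by
      rw [hq, Ideal.Quotient.mkₐ_eq_mk]
      exact Ideal.Quotient.eq_zero_iff_mem.mpr (I.mul_mem_left _ hfI))
  rw [map_mul, map_pow, eval_X] at h1
  exact mul_ne_zero (pow_ne_zero _ hi) hfa h1
end
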